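/- Let n ≥ 1, c_u ∈ (0,1), C_u ∈ (1,∞), and let U ⊊ ℝⁿ be a (c_u,C_u)-uniform domain. Then there exist constants a₀ ∈ (0,1) and A₀, A₁ ∈ (1,∞), depending only on n, c_u and C_u, with the following property: for every boundary point ξ ∈ ∂U, every radius r with 0 < r < a₀·diam(U) (every r > 0 if U is unbounded), and every pair of functions u, v that are positive and harmonic on U ∩ B(ξ, A₀r), continuous on the closure of U ∩ B(ξ, A₀r), and identically 0 on ∂U ∩ B(ξ, A₀r), one has u(x)·v(x′) ≤ A₁·u(x′)·v(x) for all x, x′ ∈ U ∩ B(ξ, r). -/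

import Mathlib

open Set Metric MeasureTheory ENNReal

noncomputable section

abbrev En (n : ℕ) := EuclideanSpace ℝ (Fin n)

/-- The length of the curve `γ : [0,1] → X`, defined as the supremum of sums
`∑ d(γ(t_i), γ(t_{i-1}))` over partitions `0 ≤ t₀ < … < t_k ≤ 1`. -/
def curveLength {X : Type*} [PseudoEMetricSpace X] (γ : ℝ → X) : ℝ≥0∞ :=
  eVariationOn γ (Set.Icc 0 1)

/-- `γ` is a continuous curve in `Ω` from `x` to `y`. -/
def IsCurveIn {X : Type*} [PseudoEMetricSpace X] (Ω : Set X) (x y : X) (γ : ℝ → X) : Prop :=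
  ContinuousOn γ (Set.Icc 0 1) ∧ Set.MapsTo γ (Set.Icc 0 1) Ω ∧ γ 0 = x ∧ γ 1 = y

/-- The inner (pseudo)metric of `Ω`: the infimum of lengths of continuous curves
joining `x` to `y` inside `Ω`. -/
def innerDist {X : Type*} [PseudoEMetricSpace X] (Ω : Set X) (x y : X) : ℝ≥0∞ :=
  ⨅ (γ : ℝ → X) (_ : IsCurveIn Ω x y γ), curveLength γ

/-- `U` is a `(c,C)`-uniform domain in `ℝⁿ`. -/
def IsUniformDomain {n : ℕ} (c C : ℝ) (U : Set (En n)) : Prop :=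
  IsOpen U ∧ IsConnected U ∧
    ∀ x ∈ U, ∀ y ∈ U, ∃ γ : ℝ → En n, IsCurveIn U x y γ ∧
      curveLength γ ≤ ENNReal.ofReal (C * dist x y) ∧
      ∀ t ∈ Set.Icc (0:ℝ) 1,
        c * min (dist x (γ t)) (dist (γ t) y) ≤ Metric.infDist (γ t) (frontier U)

/-- The Laplacian `∑ ∂²f/∂xᵢ²` of `f : ℝⁿ → ℝ`. -/
def lap {n : ℕ} (f : En n → ℝ) (x : En n) : ℝ :=
  ∑ i : Fin n,
    fderiv ℝ (fun y => fderiv ℝ f y (EuclideanSpace.single i 1)) x (EuclideanSpace.single i 1)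

/-- `f` is harmonic on the open set `V`: twice continuously differentiable with
vanishing Laplacian. -/
def IsHarmonicOn {n : ℕ} (f : En n → ℝ) (V : Set (En n)) : Prop :=
  ContDiffOn ℝ 2 f V ∧ ∀ x ∈ V, lap f x = 0

/-!
A positive harmonic function is comparable, with a constant depending only on `n`, `c`, `C` and
the number of balls in a Harnack chain, at two points joined by such a chain; in a uniform domain
the length of the curves controls that number. Harnack's inequality itself comes from a mean value
property weighted by `max 0 (1 - ‖y‖²)`, whose square is of class `C¹`, so that integration by
parts over the whole space replaces Green's formula on balls.

The other ingredient is a decay estimate. Near every boundary point there are balls inside `U` of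
comparable size, and a Gaussian barrier around such a ball shows that a harmonic function that is
nonpositive on the boundary and away from it loses a fixed factor each time the radius shrinks by
a bounded amount. Iterated often enough, this beats the growth of positive harmonic functions
allowed by Harnack chains. One consequence is Carleson's estimate `u ≤ K * u x₀` near the boundary
for a central point `x₀`. Another is that if `w` vanishes on the boundary, satisfies `w ≥ -b`
everywhere and `w ≥ b` away from the boundary, then the same holds at half the scale with a
smaller `b`, hence at all scales, so that `w` is positive. Applied to
`w = K² * u x₀ * v - v x₀ * u` this gives `v x₀ * u ≤ K² * u x₀ * v`; the theorem follows on
multiplying by the same inequality with `u` and `v` interchanged.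
-/

open InnerProductSpace Laplacian Topology

section SecondDerivative

variable {E : Type*} [NormedAddCommGroup E] [NormedSpace ℝ E]

theorem deriv_deriv_nonpos_of_isLocalMax {f : ℝ → ℝ} {a : ℝ} (hmax : IsLocalMax f a)
    (hf : ContinuousAt f a) : deriv (deriv f) a ≤ 0 := by
  by_contra! hpos
  have hmin : IsLocalMin f a := isLocalMin_of_deriv_deriv_pos hpos hmax.deriv_eq_zero hf
  have hconst : f =ᶠ[𝓝 a] fun _ ↦ f a := by
    filter_upwards [hmax, hmin] with t h₁ h₂ using le_antisymm h₁ h₂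
  have hderiv : deriv f =ᶠ[𝓝 a] fun _ ↦ 0 := by simpa using hconst.deriv
  exact hpos.ne' (by simpa using hderiv.deriv_eq)

theorem deriv_deriv_add_smul {f : E → ℝ} {x : E} (hf : ContDiffAt ℝ 2 f x) (v : E) :
    deriv (deriv fun t : ℝ ↦ f (x + t • v)) 0 = iteratedFDeriv ℝ 2 f x ![v, v] := by
  have hline (t : ℝ) : HasDerivAt (fun t : ℝ ↦ x + t • v) v t := by
    simpa using ((hasDerivAt_id t).smul_const v).const_add x
  have hx : Filter.Tendsto (fun t : ℝ ↦ x + t • v) (𝓝 0) (𝓝 x) := by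
    simpa using (hline 0).continuousAt.tendsto
  have hfirst : deriv (fun t : ℝ ↦ f (x + t • v)) =ᶠ[𝓝 0] fun t ↦ fderiv ℝ f (x + t • v) v := by
    filter_upwards [hx.eventually (hf.eventually (by simp))] with t ht
    exact ((ht.differentiableAt two_ne_zero).hasFDerivAt.comp_hasDerivAt t (hline t)).deriv
  have hfderiv : HasFDerivAt (fderiv ℝ f) (fderiv ℝ (fderiv ℝ f) x) (x + (0 : ℝ) • v) := by
    simpa using ((hf.fderiv_right (m := 1) le_rfl).differentiableAt one_ne_zero).hasFDerivAt
  have hsecond : HasDerivAt (fun t : ℝ ↦ fderiv ℝ f (x + t • v)) (fderiv ℝ (fderiv ℝ f) x v) 0 :=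
    hfderiv.comp_hasDerivAt 0 (hline 0)
  rw [hfirst.deriv_eq, iteratedFDeriv_two_apply,
    (hsecond.clm_apply (hasDerivAt_const 0 v)).deriv]
  simp

end SecondDerivative

section MaximumPrinciple

variable {E : Type*} [NormedAddCommGroup E] [InnerProductSpace ℝ E]

theorem contDiff_exp_neg_mul_norm_sub_sq (α : ℝ) (z : E) :
    ContDiff ℝ 2 fun y ↦ Real.exp (-α * ‖y - z‖ ^ 2) :=
  (contDiff_const.mul ((contDiff_id.sub contDiff_const).norm_sq ℝ)).exp

variable [FiniteDimensional ℝ E]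

theorem laplacian_nonpos_of_isLocalMax {f : E → ℝ} {x : E} (hf : ContDiffAt ℝ 2 f x)
    (hmax : IsLocalMax f x) : Δ f x ≤ 0 := by
  simp only [laplacian_eq_iteratedFDeriv_stdOrthonormalBasis]
  refine Finset.sum_nonpos fun i _ ↦ ?_
  rw [← deriv_deriv_add_smul hf]
  set line : ℝ → E := fun t ↦ x + t • stdOrthonormalBasis ℝ E i
  have hline : ContinuousAt line 0 := by fun_prop
  have hx : line 0 = x := by simp [line]
  rw [← hx] at hf hmax
  exact deriv_deriv_nonpos_of_isLocalMax (hmax.comp_continuous hline) (hf.continuousAt.comp hline)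

theorem nonpos_of_laplacian_pos {g : E → ℝ} {K : Set E} (hK : IsCompact K)
    (hg : ContinuousOn g K)
    (hlap : ∀ p ∈ interior K, 0 < g p → ContDiffAt ℝ 2 g p ∧ 0 < Δ g p)
    (hbd : ∀ p ∈ K \ interior K, g p ≤ 0) {x : E} (hx : x ∈ K) : g x ≤ 0 := by
  obtain ⟨p, hpK, hpmax⟩ := hK.exists_isMaxOn ⟨x, hx⟩ hg
  by_contra! hgx
  have hgp : 0 < g p := hgx.trans_le (hpmax hx)
  have hpint : p ∈ interior K := by
    by_contra hpint
    exact (hbd p ⟨hpK, hpint⟩).not_gt hgp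
  obtain ⟨hgC, hgΔ⟩ := hlap p hpint hgp
  exact (laplacian_nonpos_of_isLocalMax hgC
    (hpmax.isLocalMax (mem_interior_iff_mem_nhds.mp hpint))).not_gt hgΔ

theorem laplacian_exp_neg_mul_norm_sub_sq (α : ℝ) (z x : E) :
    Δ (fun y ↦ Real.exp (-α * ‖y - z‖ ^ 2)) x =
      (4 * α ^ 2 * ‖x - z‖ ^ 2 - 2 * α * Module.finrank ℝ E) *
        Real.exp (-α * ‖x - z‖ ^ 2) := by
  set b := stdOrthonormalBasis ℝ E
  have hdir (i) : iteratedFDeriv ℝ 2 (fun y ↦ Real.exp (-α * ‖y - z‖ ^ 2)) x ![b i, b i] =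
      (4 * α ^ 2 * inner ℝ (b i) (x - z) ^ 2 - 2 * α) * Real.exp (-α * ‖x - z‖ ^ 2) := by
    set c := inner ℝ (b i) (x - z)
    have hline (t : ℝ) : ‖x + t • b i - z‖ ^ 2 = ‖x - z‖ ^ 2 + 2 * t * c + t ^ 2 := by
      rw [add_sub_right_comm, norm_add_sq_real, inner_smul_right, real_inner_comm, norm_smul,
        b.norm_eq_one]
      simp only [Real.norm_eq_abs, mul_one, sq_abs, c]
      ring
    have hfirst (t : ℝ) : HasDerivAt (fun t : ℝ ↦ -α * (‖x - z‖ ^ 2 + 2 * t * c + t ^ 2))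
        (-α * (2 * c + 2 * t)) t := by
      refine ((((((hasDerivAt_id t).const_mul 2).mul_const c).const_add (‖x - z‖ ^ 2)).add
        ((hasDerivAt_id t).pow 2)).const_mul (-α)).congr_deriv (by simp)
    have hsecond : HasDerivAt (fun t : ℝ ↦ -α * (2 * c + 2 * t)) (-α * 2) 0 := by
      simpa using (((hasDerivAt_id (0 : ℝ)).const_mul 2).const_add (2 * c)).const_mul (-α)
    rw [← deriv_deriv_add_smul (contDiff_exp_neg_mul_norm_sub_sq α z).contDiffAt]
    simp only [hline]
    rw [funext fun t ↦ (hfirst t).exp.deriv, ((hfirst 0).exp.fun_mul hsecond).deriv]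
    simp only [mul_zero, zero_mul, add_zero, ne_eq, OfNat.ofNat_ne_zero, not_false_eq_true,
      zero_pow]
    ring
  simp only [laplacian_eq_iteratedFDeriv_stdOrthonormalBasis]
  rw [Finset.sum_congr rfl fun i _ ↦ hdir i, ← Finset.sum_mul, Finset.sum_sub_distrib,
    ← Finset.mul_sum, b.sum_sq_inner_right]
  simp [mul_comm]

end MaximumPrinciple

section CoordinateLaplacian

variable {n : ℕ}

theorem lap_eq_laplacian {f : En n → ℝ} {x : En n} (hf : ContDiffAt ℝ 2 f x) :
    lap f x = Δ f x := by
  have hfd : DifferentiableAt ℝ (fderiv ℝ f) x :=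
    (hf.fderiv_right (m := 1) le_rfl).differentiableAt one_ne_zero
  rw [laplacian_eq_iteratedFDeriv_orthonormalBasis f (EuclideanSpace.basisFun (Fin n) ℝ)]
  refine Finset.sum_congr rfl fun i _ ↦ ?_
  rw [iteratedFDeriv_two_apply, fderiv_clm_apply hfd (differentiableAt_const _)]
  simp

theorem IsHarmonicOn.harmonicOnNhd {f : En n → ℝ} {V : Set (En n)} (hV : IsOpen V)
    (hf : IsHarmonicOn f V) : HarmonicOnNhd f V := by
  have hC (x) (hx : x ∈ V) : ContDiffAt ℝ 2 f x := hf.1.contDiffAt (hV.mem_nhds hx)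
  refine fun x hx ↦ ⟨hC x hx, ?_⟩
  filter_upwards [hV.mem_nhds hx] with y hy
  rw [← lap_eq_laplacian (hC y hy), hf.2 y hy, Pi.zero_apply]

end CoordinateLaplacian

section GrowthLemma

/-- The contraction factor of the growth lemma in dimension `d`: a function that is nonpositive on
the ball of radius `s` and at most `S` on the ball of radius `κ * s` is at most
`growthFactor d κ * S` on the ball of radius `κ * s / 2`. The two exponentials are the values of the
barrier `y ↦ exp (-(d + 1) * ‖y - z‖ ^ 2 / s ^ 2)` at distance `κ * s / 2` and `κ * s`. -/
def growthFactor (d : ℕ) (κ : ℝ) : ℝ :=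
  1 - (Real.exp (-(d + 1) * (κ / 2) ^ 2) - Real.exp (-(d + 1) * κ ^ 2))

theorem growthFactor_pos (d : ℕ) (κ : ℝ) : 0 < growthFactor d κ := by
  have hle : Real.exp (-(d + 1) * (κ / 2) ^ 2) ≤ 1 := Real.exp_le_one_iff.mpr (by
    rw [neg_mul, Left.neg_nonpos_iff]; positivity)
  have hpos := Real.exp_pos (-(d + 1) * κ ^ 2)
  simp only [growthFactor]
  linarith

theorem growthFactor_lt_one (d : ℕ) {κ : ℝ} (hκ : 0 < κ) : growthFactor d κ < 1 := by
  have hlt : Real.exp (-(d + 1) * κ ^ 2) < Real.exp (-(d + 1) * (κ / 2) ^ 2) := by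
    rw [Real.exp_lt_exp, neg_mul, neg_mul, neg_lt_neg_iff]
    gcongr
    linarith
  simp only [growthFactor]
  linarith

variable {E : Type*} [NormedAddCommGroup E] [InnerProductSpace ℝ E]

/-- The barrier of the growth lemma: it is nonnegative, equals `1` on the
sphere of radius `κ * s` about `z`, is strictly superharmonic off the ball of radius `s`, and is at
most `growthFactor` on the ball of radius `κ * s / 2`. The rate `(d + 1) / s ^ 2` is what makes the
Gaussian subharmonic at distance more than `s`. -/
def growthBarrier (z : E) (κ s : ℝ) (y : E) : ℝ :=
  1 + Real.exp (-(Module.finrank ℝ E + 1) * κ ^ 2) -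
    Real.exp (-((Module.finrank ℝ E + 1) / s ^ 2) * ‖y - z‖ ^ 2)

theorem contDiff_growthBarrier (z : E) (κ s : ℝ) : ContDiff ℝ 2 (growthBarrier z κ s) :=
  contDiff_const.sub (contDiff_exp_neg_mul_norm_sub_sq _ z)

theorem growthBarrier_nonneg (z : E) (κ s : ℝ) (y : E) : 0 ≤ growthBarrier z κ s y := by
  have hle : Real.exp (-((Module.finrank ℝ E + 1) / s ^ 2) * ‖y - z‖ ^ 2) ≤ 1 :=
    Real.exp_le_one_iff.mpr (by rw [neg_mul, Left.neg_nonpos_iff]; positivity)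
  have hpos := Real.exp_pos (-(Module.finrank ℝ E + 1) * κ ^ 2)
  simp only [growthBarrier]
  linarith

theorem growthBarrier_eq_one {z y : E} {κ s : ℝ} (hs : s ≠ 0) (hy : y ∈ sphere z (κ * s)) :
    growthBarrier z κ s y = 1 := by
  have hexp : -((Module.finrank ℝ E + 1) / s ^ 2) * (κ * s) ^ 2 =
      -(Module.finrank ℝ E + 1) * κ ^ 2 := by field_simp
  simp only [growthBarrier, mem_sphere_iff_norm.mp hy, hexp]
  ring

theorem growthBarrier_le {z x : E} {κ s : ℝ} (hs : s ≠ 0) (hx : dist x z ≤ κ * s / 2) :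
    growthBarrier z κ s x ≤ growthFactor (Module.finrank ℝ E) κ := by
  have hsq : ‖x - z‖ ^ 2 ≤ (κ * s / 2) ^ 2 := by rw [← dist_eq_norm]; gcongr
  have hexp : -(Module.finrank ℝ E + 1) * (κ / 2) ^ 2 ≤
      -((Module.finrank ℝ E + 1) / s ^ 2) * ‖x - z‖ ^ 2 :=
    calc -(Module.finrank ℝ E + 1) * (κ / 2) ^ 2
        = -((Module.finrank ℝ E + 1) / s ^ 2 * (κ * s / 2) ^ 2) := by field_simp
      _ ≤ -((Module.finrank ℝ E + 1) / s ^ 2 * ‖x - z‖ ^ 2) := by gcongr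
      _ = _ := (neg_mul _ _).symm
  have := Real.exp_le_exp.mpr hexp
  simp only [growthBarrier, growthFactor]
  linarith

variable [FiniteDimensional ℝ E]

theorem laplacian_growthBarrier_neg {z p : E} {s : ℝ} (hs : 0 < s) (hp : s < dist p z) (κ : ℝ) :
    Δ (growthBarrier z κ s) p < 0 := by
  set d : ℝ := (Module.finrank ℝ E : ℝ)
  have hd : 0 ≤ d := Nat.cast_nonneg _
  set α : ℝ := (d + 1) / s ^ 2 with hα
  have : 0 < α := by positivity
  have hαs : α * s ^ 2 = d + 1 := by rw [hα]; field_simp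
  have hsp : α * s ^ 2 < α * ‖p - z‖ ^ 2 := by rw [← dist_eq_norm]; gcongr
  have hcoeff : 0 < 4 * α ^ 2 * ‖p - z‖ ^ 2 - 2 * α * d :=
    calc 0 < 2 * α * (2 * (α * s ^ 2) - d) := by
          rw [hαs]; exact mul_pos (by positivity) (by linarith)
      _ < 2 * α * (2 * (α * ‖p - z‖ ^ 2) - d) := by gcongr
      _ = 4 * α ^ 2 * ‖p - z‖ ^ 2 - 2 * α * d := by ring
  have hconst : ContDiffAt ℝ 2 (fun _ : E ↦ 1 + Real.exp (-(d + 1) * κ ^ 2)) p := contDiffAt_const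
  have hsub := hconst.laplacian_sub (contDiff_exp_neg_mul_norm_sub_sq α z).contDiffAt
  rw [laplacian_const, laplacian_exp_neg_mul_norm_sub_sq, Pi.zero_apply, zero_sub] at hsub
  exact hsub.trans_lt (neg_neg_of_pos (mul_pos hcoeff (Real.exp_pos _)))

theorem closure_inter_subset_closure_inter {X : Type*} [TopologicalSpace X] {U W K : Set X}
    (hW : IsOpen W) (hK : K ⊆ W) : closure U ∩ K ⊆ closure (U ∩ W) := by
  rw [inter_comm, inter_comm U]
  exact (inter_subset_inter_left _ hK).trans hW.inter_closure

variable {U W : Set E} {w : E → ℝ} {z x : E} {s S : ℝ}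

theorem le_of_laplacian_neg (hU : IsOpen U) (hW : IsOpen W) (hw : HarmonicContOnCl w (U ∩ W))
    (hbd : ∀ y ∈ frontier U ∩ W, w y ≤ 0) {R : ℝ} (hball : closedBall z R ⊆ W)
    (hwS : ∀ y ∈ U ∩ closedBall z R, w y ≤ S) (hw0 : ∀ y ∈ U ∩ closedBall z s, w y ≤ 0)
    {b : E → ℝ} (hb : ContDiff ℝ 2 b) (hb0 : ∀ y ∈ closedBall z R, 0 ≤ b y)
    (hbS : ∀ y ∈ sphere z R, S ≤ b y) (hbΔ : ∀ y, s < dist y z → Δ b y < 0)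
    (hx : x ∈ U ∩ closedBall z R) : w x ≤ b x := by
  set K : Set E := closure U ∩ closedBall z R
  have hmemU {p : E} (hp : p ∈ K) (hbp : b p < w p) : p ∈ U := by
    by_contra hpU
    have := hbd p ⟨hU.frontier_eq ▸ ⟨hp.1, hpU⟩, hball hp.2⟩
    linarith [hb0 p hp.2]
  have hwbK : ContinuousOn (w - b) K :=
    (hw.continuousOn.mono (closure_inter_subset_closure_inter hW hball)).sub
      hb.continuous.continuousOn
  refine sub_nonpos.mp (nonpos_of_laplacian_pos
    ((isCompact_closedBall z R).inter_left isClosed_closure) hwbK (fun p hp hpos ↦ ?_)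
    (fun p hp ↦ ?_) ⟨subset_closure hx.1, hx.2⟩)
  · have hpK : p ∈ K := interior_subset hp
    have hpUW : p ∈ U ∩ W := ⟨hmemU hpK (sub_pos.mp hpos), hball hpK.2⟩
    have hps : s < dist p z := by
      by_contra! hps
      exact hpos.not_ge (sub_nonpos.mpr ((hw0 p ⟨hpUW.1, hps⟩).trans (hb0 p hpK.2)))
    obtain ⟨hwC, hwΔ⟩ := hw.harmonicOnNhd p hpUW
    refine ⟨hwC.sub hb.contDiffAt, ?_⟩
    rw [hwC.laplacian_sub hb.contDiffAt, hwΔ.self_of_nhds, Pi.zero_apply, zero_sub]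
    exact neg_pos.mpr (hbΔ p hps)
  · by_contra! hpos
    have hpU := hmemU hp.1 (sub_pos.mp hpos)
    have hpR : dist p z = R := by
      refine hp.1.2.antisymm (not_lt.mp fun hlt ↦ hp.2 (mem_interior.mpr ?_))
      exact ⟨U ∩ ball z R, inter_subset_inter subset_closure ball_subset_closedBall,
        hU.inter isOpen_ball, hpU, hlt⟩
    exact hpos.not_ge (sub_nonpos.mpr ((hwS p ⟨hpU, hp.1.2⟩).trans (hbS p hpR)))

theorem le_growthFactor_mul (hU : IsOpen U) (hW : IsOpen W) (hw : HarmonicContOnCl w (U ∩ W))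
    (hbd : ∀ y ∈ frontier U ∩ W, w y ≤ 0) {κ : ℝ} (hκ : 0 < κ) (hs : 0 < s) (hS : 0 < S)
    (hball : closedBall z (κ * s) ⊆ W) (hwS : ∀ y ∈ U ∩ closedBall z (κ * s), w y ≤ S)
    (hw0 : ∀ y ∈ U ∩ closedBall z s, w y ≤ 0) (hx : x ∈ U) (hxz : dist x z ≤ κ * s / 2) :
    w x ≤ growthFactor (Module.finrank ℝ E) κ * S := by
  have hbC := contDiff_growthBarrier z κ s
  have hwb : w x ≤ S * growthBarrier z κ s x := by
    refine le_of_laplacian_neg hU hW hw hbd hball hwS hw0 (hbC.const_smul S)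
      (fun y _ ↦ mul_nonneg hS.le (growthBarrier_nonneg z κ s y))
      (fun y hy ↦ by simp [growthBarrier_eq_one hs.ne' hy]) (fun y hy ↦ ?_)
      ⟨hx, hxz.trans (by linarith [mul_pos hκ hs])⟩
    rw [← Pi.smul_def, laplacian_smul S hbC.contDiffAt]
    exact mul_neg_of_pos_of_neg hS (laplacian_growthBarrier_neg hs hy κ)
  rw [mul_comm]
  exact hwb.trans (mul_le_mul_of_nonneg_left (growthBarrier_le hs.ne' hxz) hS.le)

end GrowthLemma

section WeightedMeanValue

theorem hasDerivAt_max_zero_sq (x : ℝ) :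
    HasDerivAt (fun x : ℝ ↦ max 0 x ^ 2) (2 * max 0 x) x := by
  have hquad (y : ℝ) : ‖max 0 y ^ 2 - max 0 x ^ 2 - (y - x) • (2 * max 0 x)‖ ≤ ‖y - x‖ ^ 2 := by
    rw [Real.norm_eq_abs, Real.norm_eq_abs, sq_abs, smul_eq_mul, abs_le]
    rcases max_cases 0 x with ⟨hx, _⟩ | ⟨hx, _⟩ <;> rcases max_cases 0 y with ⟨hy, _⟩ | ⟨hy, _⟩ <;>
      rw [hx, hy] <;> constructor <;> nlinarith
  rw [hasDerivAt_iff_isLittleO]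
  exact (Asymptotics.isBigO_of_le (𝓝 x) fun y ↦ (hquad y).trans (le_abs_self _)).trans_isLittleO
    (Asymptotics.isLittleO_pow_sub_sub x one_lt_two)

variable {E : Type*} [NormedAddCommGroup E]

/-- The weight `max 0 (1 - ‖y‖²)` used to average harmonic functions over the unit ball. Its square
is of class `C¹`, with gradient `-4 * paraboloidWeight y • y`. -/
def paraboloidWeight (y : E) : ℝ := max 0 (1 - ‖y‖ ^ 2)

theorem paraboloidWeight_nonneg (y : E) : 0 ≤ paraboloidWeight y := le_max_left _ _

theorem continuous_paraboloidWeight : Continuous (paraboloidWeight : E → ℝ) := by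
  unfold paraboloidWeight
  fun_prop

theorem paraboloidWeight_eq_zero {y : E} (hy : 1 ≤ ‖y‖) : paraboloidWeight y = 0 :=
  max_eq_left (by nlinarith)

theorem paraboloidWeight_le_one (y : E) : paraboloidWeight y ≤ 1 :=
  max_le zero_le_one (by linarith [sq_nonneg ‖y‖])

variable [InnerProductSpace ℝ E]

theorem hasFDerivAt_paraboloidWeight_sq (y : E) :
    HasFDerivAt (fun y : E ↦ paraboloidWeight y ^ 2) ((-4 * paraboloidWeight y) • innerSL ℝ y)
      y := by
  have hpoly : HasFDerivAt (fun y : E ↦ 1 - ‖y‖ ^ 2) (-(2 • innerSL ℝ y)) y :=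
    (hasStrictFDerivAt_norm_sq y).hasFDerivAt.const_sub 1
  refine ((hasDerivAt_max_zero_sq (1 - ‖y‖ ^ 2)).comp_hasFDerivAt y hpoly).congr_fderiv ?_
  rw [paraboloidWeight, smul_neg, ← neg_smul, ← Nat.cast_smul_eq_nsmul ℝ, smul_smul]
  congr 1
  push_cast
  ring

theorem paraboloidWeight_rescale_le {a b z : E} {ρ : ℝ} (hρ : 0 < ρ) (hab : dist a b ≤ ρ / 4) :
    paraboloidWeight (ρ⁻¹ • (z - a)) ≤ 2 * paraboloidWeight ((2 * ρ)⁻¹ • (z - b)) := by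
  rcases le_or_gt 1 ‖ρ⁻¹ • (z - a)‖ with hza | hza
  · rw [paraboloidWeight_eq_zero hza]
    exact mul_nonneg zero_le_two (paraboloidWeight_nonneg _)
  have hza' : ‖z - a‖ < ρ := by
    rwa [norm_smul, norm_inv, Real.norm_of_nonneg hρ.le, inv_mul_lt_iff₀ hρ, mul_one] at hza
  have hzb : ‖z - b‖ ≤ 5 / 4 * ρ := by
    linarith [norm_sub_le_norm_sub_add_norm_sub z a b, dist_eq_norm a b]
  have hzb' : ‖(2 * ρ)⁻¹ • (z - b)‖ ≤ 5 / 8 := by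
    rw [norm_smul, norm_inv, Real.norm_of_nonneg (by positivity), inv_mul_le_iff₀ (by positivity)]
    linarith
  have hhalf : 1 / 2 ≤ paraboloidWeight ((2 * ρ)⁻¹ • (z - b)) :=
    le_max_of_le_right (by nlinarith [norm_nonneg ((2 * ρ)⁻¹ • (z - b))])
  linarith [paraboloidWeight_le_one (ρ⁻¹ • (z - a))]

theorem hasFDerivAt_fderiv_add_smul {f : E → ℝ} (hf : ContDiff ℝ 2 f) (x v : E) (t : ℝ) (y : E) :
    HasFDerivAt (fun y ↦ fderiv ℝ f (x + t • y) v)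
      (t • (fderiv ℝ (fderiv ℝ f) (x + t • y)).flip v) y := by
  have hline : HasFDerivAt (fun y : E ↦ x + t • y) (t • ContinuousLinearMap.id ℝ E) y :=
    ((hasFDerivAt_id y).const_smul t).const_add x
  have hfderiv : DifferentiableAt ℝ (fderiv ℝ f) (x + t • y) :=
    (hf.fderiv_right (m := 1) le_rfl).differentiable one_ne_zero _
  refine ((hfderiv.hasFDerivAt.comp y hline).clm_apply (hasFDerivAt_const v y)).congr_fderiv ?_
  ext u
  simp

variable [FiniteDimensional ℝ E]

theorem hasCompactSupport_paraboloidWeight : HasCompactSupport (paraboloidWeight : E → ℝ) :=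
  HasCompactSupport.intro (isCompact_closedBall 0 1) fun y hy ↦
    paraboloidWeight_eq_zero (by simpa using (not_le.mp (mem_closedBall_zero_iff.not.mp hy)).le)

variable [MeasurableSpace E] [BorelSpace E]

theorem integrable_paraboloidWeight_mul {g : E → ℝ} (hg : Continuous g) :
    Integrable fun y ↦ paraboloidWeight y * g y :=
  (continuous_paraboloidWeight.mul hg).integrable_of_hasCompactSupport
    hasCompactSupport_paraboloidWeight.mul_right

theorem integrable_paraboloidWeight_sq_mul {g : E → ℝ} (hg : Continuous g) :
    Integrable fun y ↦ paraboloidWeight y ^ 2 * g y := by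
  simpa only [sq, mul_assoc] using
    integrable_paraboloidWeight_mul (continuous_paraboloidWeight.fun_mul hg)

variable {f : E → ℝ}

theorem integral_paraboloidWeight_mul_fderiv_dir (hf : ContDiff ℝ 2 f) (x v : E) (t : ℝ) :
    ∫ y, paraboloidWeight y * (inner ℝ y v * fderiv ℝ f (x + t • y) v) =
      t / 4 * ∫ y, paraboloidWeight y ^ 2 * iteratedFDeriv ℝ 2 f (x + t • y) ![v, v] := by
  have := continuous_paraboloidWeight (E := E)
  have hG := hasFDerivAt_fderiv_add_smul hf x v t
  have hGc : Continuous fun y ↦ fderiv ℝ f (x + t • y) v :=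
    continuous_iff_continuousAt.mpr fun y ↦ (hG y).continuousAt
  have hwsq (y : E) : fderiv ℝ (fun y : E ↦ paraboloidWeight y ^ 2) y v =
      -4 * (paraboloidWeight y * inner ℝ y v) := by
    rw [(hasFDerivAt_paraboloidWeight_sq y).fderiv]
    simp only [neg_mul, neg_smul, neg_apply, smul_apply, coe_innerSL_apply,
      smul_eq_mul, neg_inj]
    ring
  have hGv (y : E) : fderiv ℝ (fun y ↦ fderiv ℝ f (x + t • y) v) y v =
      t * iteratedFDeriv ℝ 2 f (x + t • y) ![v, v] := by
    rw [(hG y).fderiv, iteratedFDeriv_two_apply]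
    simp
  have hD2 : Continuous fun y ↦ iteratedFDeriv ℝ 2 f (x + t • y) ![v, v] :=
    ((hf.continuous_iteratedFDeriv le_rfl).comp (by fun_prop)).eval_const _
  have hweighted : Integrable fun y ↦ -4 * (paraboloidWeight y * inner ℝ y v) *
      fderiv ℝ f (x + t • y) v := by
    simpa only [mul_assoc] using (integrable_paraboloidWeight_mul
      (g := fun y ↦ inner ℝ y v * fderiv ℝ f (x + t • y) v) (by fun_prop)).const_mul (-4)
  have hparts := integral_mul_fderiv_eq_neg_fderiv_mul_of_integrable (μ := volume)
    (f := fun y : E ↦ paraboloidWeight y ^ 2) (g := fun y ↦ fderiv ℝ f (x + t • y) v) (v := v)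
    (by simpa only [hwsq] using hweighted)
    (by simpa only [hGv] using integrable_paraboloidWeight_sq_mul (hD2.const_mul t))
    (integrable_paraboloidWeight_sq_mul hGc)
    (fun y _ ↦ (hasFDerivAt_paraboloidWeight_sq y).differentiableAt)
    (fun y _ ↦ (hG y).differentiableAt)
  simp only [hwsq, hGv, mul_assoc, mul_left_comm _ t, integral_const_mul] at hparts
  linarith

theorem integral_paraboloidWeight_mul_fderiv (hf : ContDiff ℝ 2 f) (x : E) (t : ℝ) :
    ∫ y, paraboloidWeight y * fderiv ℝ f (x + t • y) y =
      t / 4 * ∫ y, paraboloidWeight y ^ 2 * Δ f (x + t • y) := by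
  have hf' := hf.continuous_fderiv two_ne_zero
  have hD2 (v : E) : Continuous fun y ↦ iteratedFDeriv ℝ 2 f (x + t • y) ![v, v] :=
    ((hf.continuous_iteratedFDeriv le_rfl).comp (by fun_prop)).eval_const _
  have hexpand (y : E) : paraboloidWeight y * fderiv ℝ f (x + t • y) y =
      ∑ i, paraboloidWeight y * (inner ℝ y (stdOrthonormalBasis ℝ E i) *
        fderiv ℝ f (x + t • y) (stdOrthonormalBasis ℝ E i)) := by
    conv_lhs => enter [2, 2]; rw [← (stdOrthonormalBasis ℝ E).sum_repr' y]
    simp [Finset.mul_sum, real_inner_comm]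
  simp only [hexpand, laplacian_eq_iteratedFDeriv_stdOrthonormalBasis, Finset.mul_sum]
  rw [integral_finsetSum _ fun i _ ↦ integrable_paraboloidWeight_mul (by fun_prop),
    integral_finsetSum _ fun i _ ↦ integrable_paraboloidWeight_sq_mul (hD2 _), Finset.mul_sum]
  exact Finset.sum_congr rfl fun i _ ↦ integral_paraboloidWeight_mul_fderiv_dir hf x _ t

theorem hasDerivAt_integral_paraboloidWeight_mul (hf : ContDiff ℝ 1 f) (x : E) (t : ℝ) :
    HasDerivAt (fun t : ℝ ↦ ∫ y, paraboloidWeight y * f (x + t • y))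
      (∫ y, paraboloidWeight y * fderiv ℝ f (x + t • y) y) t := by
  have hfc := hf.continuous
  have hcont : Continuous fun p : ℝ × E ↦ fderiv ℝ f (x + p.1 • p.2) p.2 := by
    have := hf.continuous_fderiv one_ne_zero
    fun_prop
  obtain ⟨C, hC⟩ := ((isCompact_closedBall t 1).prod
    (isCompact_closedBall (0 : E) 1)).exists_bound_of_continuousOn hcont.continuousOn
  refine (hasDerivAt_integral_of_dominated_loc_of_deriv_le (μ := (volume : Measure E))
    (F' := fun (t : ℝ) y ↦ paraboloidWeight y * fderiv ℝ f (x + t • y) y)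
    (bound := fun y ↦ paraboloidWeight y * C) (closedBall_mem_nhds t one_pos)
    (.of_forall fun s ↦ (integrable_paraboloidWeight_mul (by fun_prop)).aestronglyMeasurable)
    (integrable_paraboloidWeight_mul (by fun_prop))
    (integrable_paraboloidWeight_mul (by fun_prop)).aestronglyMeasurable
    (.of_forall fun y s hs ↦ ?_) (integrable_paraboloidWeight_mul continuous_const)
    (.of_forall fun y s _ ↦ ?_)).2
  · rcases le_or_gt ‖y‖ 1 with hy | hy
    · rw [norm_mul, Real.norm_of_nonneg (paraboloidWeight_nonneg y)]
      exact mul_le_mul_of_nonneg_left (hC (s, y) ⟨hs, by simpa using hy⟩)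
        (paraboloidWeight_nonneg y)
    · simp [paraboloidWeight_eq_zero hy.le]
  · have hline : HasDerivAt (fun s : ℝ ↦ x + s • y) y s := by
      simpa using ((hasDerivAt_id s).smul_const y).const_add x
    exact ((hf.differentiable one_ne_zero _).hasFDerivAt.comp_hasDerivAt s hline).const_mul _

theorem integral_paraboloidWeight_mul_comp_add_smul (hf : ContDiff ℝ 2 f) {x : E} {ρ : ℝ}
    (hρ : 0 ≤ ρ) (hΔ : ∀ y ∈ ball x ρ, Δ f y = 0) :
    ∫ y, paraboloidWeight y * f (x + ρ • y) = (∫ y : E, paraboloidWeight y) * f x := by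
  have hderiv := hasDerivAt_integral_paraboloidWeight_mul (hf.of_le one_le_two) x
  have hzero (t : ℝ) (ht : t ∈ Ico 0 ρ) :
      ∫ y, paraboloidWeight y * fderiv ℝ f (x + t • y) y = 0 := by
    have hvanish (y : E) : paraboloidWeight y ^ 2 * Δ f (x + t • y) = 0 := by
      rcases le_or_gt 1 ‖y‖ with hy | hy
      · simp [paraboloidWeight_eq_zero hy]
      · rw [hΔ, mul_zero]
        rw [mem_ball_iff_norm, add_sub_cancel_left, norm_smul, Real.norm_of_nonneg ht.1]
        exact (mul_le_of_le_one_right ht.1 hy.le).trans_lt ht.2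
    rw [integral_paraboloidWeight_mul_fderiv hf]
    simp [hvanish]
  have hconst := constant_of_has_deriv_right_zero
    (fun t _ ↦ (hderiv t).continuousAt.continuousWithinAt)
    (fun t ht ↦ hzero t ht ▸ (hderiv t).hasDerivWithinAt) ρ ⟨hρ, le_rfl⟩
  rw [hconst]
  simp [integral_mul_const]

end WeightedMeanValue

section HarnackInequality

variable {E : Type*} [NormedAddCommGroup E] [InnerProductSpace ℝ E] [FiniteDimensional ℝ E]

theorem exists_contDiff_eqOn_closedBall {F : Type*} [NormedAddCommGroup F] [NormedSpace ℝ F]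
    {f : E → F} {k : ℕ∞} {b : E} {r R : ℝ} (hr : 0 < r) (hrR : r < R)
    (hf : ∀ y ∈ ball b R, ContDiffAt ℝ k f y) :
    ∃ g : E → F, ContDiff ℝ k g ∧ EqOn g f (closedBall b r) := by
  obtain ⟨r', hrr', hr'R⟩ := exists_between hrR
  let χ : ContDiffBump b := ⟨r, r', hr, hrr'⟩
  refine ⟨fun y ↦ χ y • f y, contDiff_iff_contDiffAt.mpr fun y ↦ ?_, fun y hy ↦ ?_⟩
  · rcases lt_or_ge (dist y b) R with hy | hy
    · exact χ.contDiff.contDiffAt.smul (hf y hy)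
    · refine (contDiffAt_const (c := 0)).congr_of_eventuallyEq ?_
      have hout : y ∈ (closedBall b r')ᶜ := by simpa using hr'R.trans_le hy
      filter_upwards [isClosed_closedBall.isOpen_compl.mem_nhds hout] with z hz
      rw [χ.zero_of_le_dist (not_le.mp (mem_closedBall.not.mp hz)).le, zero_smul]
  · simp only [χ.one_of_mem_closedBall hy, one_smul]

section Integral

variable [MeasurableSpace E] [BorelSpace E]

theorem integral_paraboloidWeight_pos : 0 < ∫ y : E, paraboloidWeight y :=
  continuous_paraboloidWeight.integral_pos_of_hasCompactSupport_nonneg_nonzero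
    hasCompactSupport_paraboloidWeight paraboloidWeight_nonneg (x := 0)
    (by simp [paraboloidWeight])

variable {f : E → ℝ} {a b x : E} {ρ : ℝ}

theorem integrable_paraboloidWeight_rescale_mul (hf : Continuous f) (x : E) (hρ : ρ ≠ 0) :
    Integrable fun z ↦ paraboloidWeight (ρ⁻¹ • (z - x)) * f z := by
  have hg : Integrable fun y ↦ paraboloidWeight y * f (x + ρ • y) :=
    integrable_paraboloidWeight_mul (by fun_prop)
  simpa [smul_inv_smul₀ hρ] using (hg.comp_smul (inv_ne_zero hρ)).comp_sub_right x

theorem integral_paraboloidWeight_rescale_mul (f : E → ℝ) (x : E) (hρ : 0 < ρ) :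
    ∫ z, paraboloidWeight (ρ⁻¹ • (z - x)) * f z =
      ρ ^ Module.finrank ℝ E * ∫ y, paraboloidWeight y * f (x + ρ • y) := by
  have hscale := Measure.integral_comp_inv_smul_of_nonneg volume
    (fun y ↦ paraboloidWeight y * f (x + ρ • y)) hρ.le
  rw [← integral_sub_right_eq_self _ x] at hscale
  simpa [smul_inv_smul₀ hρ.ne'] using hscale

theorem integral_paraboloidWeight_rescale_mul_eq (hf : ContDiff ℝ 2 f) (hρ : 0 < ρ)
    (hΔ : ∀ y ∈ ball x ρ, Δ f y = 0) :
    ∫ z, paraboloidWeight (ρ⁻¹ • (z - x)) * f z =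
      ρ ^ Module.finrank ℝ E * ((∫ y : E, paraboloidWeight y) * f x) := by
  rw [integral_paraboloidWeight_rescale_mul f x hρ,
    integral_paraboloidWeight_mul_comp_add_smul hf hρ.le hΔ]

theorem integral_paraboloidWeight_rescale_mul_le (hf : Continuous f) (hρ : 0 < ρ)
    (hab : dist a b ≤ ρ / 4) (hf0 : ∀ y ∈ ball b (2 * ρ), 0 ≤ f y) :
    ∫ z, paraboloidWeight (ρ⁻¹ • (z - a)) * f z ≤
      2 * ∫ z, paraboloidWeight ((2 * ρ)⁻¹ • (z - b)) * f z := by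
  rw [← integral_const_mul]
  refine integral_mono (integrable_paraboloidWeight_rescale_mul hf a hρ.ne')
    ((integrable_paraboloidWeight_rescale_mul hf b (by positivity)).const_mul 2) fun z ↦ ?_
  have hle := paraboloidWeight_rescale_le (z := z) hρ hab
  rcases lt_or_ge (dist z b) (2 * ρ) with hz | hz
  · simpa only [mul_assoc] using mul_le_mul_of_nonneg_right hle (hf0 z hz)
  · have hb : paraboloidWeight ((2 * ρ)⁻¹ • (z - b)) = 0 := paraboloidWeight_eq_zero (by
      rwa [norm_smul, norm_inv, Real.norm_of_nonneg (by positivity), ← dist_eq_norm,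
        le_inv_mul_iff₀ (by positivity), mul_one])
    have ha : paraboloidWeight (ρ⁻¹ • (z - a)) = 0 :=
      le_antisymm (hle.trans_eq (by rw [hb, mul_zero])) (paraboloidWeight_nonneg _)
    simp only [ha, hb, zero_mul, mul_zero, le_refl]

end Integral

theorem harnack_of_contDiff {f : E → ℝ} {a b : E} {ρ : ℝ} (hf : ContDiff ℝ 2 f) (hρ : 0 < ρ)
    (hab : dist a b ≤ ρ / 4) (hΔ : ∀ y ∈ ball b (2 * ρ), Δ f y = 0)
    (hf0 : ∀ y ∈ ball b (2 * ρ), 0 ≤ f y) :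
    f a ≤ 2 * 2 ^ Module.finrank ℝ E * f b := by
  borelize E
  have hle := integral_paraboloidWeight_rescale_mul_le hf.continuous hρ hab hf0
  rw [integral_paraboloidWeight_rescale_mul_eq hf (by positivity) hΔ,
    integral_paraboloidWeight_rescale_mul_eq hf hρ
      fun y hy ↦ hΔ y (ball_subset_ball' (by linarith) hy), mul_pow] at hle
  have hpos : 0 < ρ ^ Module.finrank ℝ E * ∫ y : E, paraboloidWeight y :=
    mul_pos (by positivity) integral_paraboloidWeight_pos
  exact le_of_mul_le_mul_left (by linarith) hpos

theorem harnack_of_harmonicOnNhd {f : E → ℝ} {a b : E} {ρ : ℝ}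
    (hf : HarmonicOnNhd f (ball b (3 * ρ))) (hf0 : ∀ y ∈ ball b (3 * ρ), 0 ≤ f y) (hρ : 0 < ρ)
    (hab : dist a b ≤ ρ / 4) : f a ≤ 2 * 2 ^ Module.finrank ℝ E * f b := by
  obtain ⟨g, hg, hgf⟩ := exists_contDiff_eqOn_closedBall (k := 2) (r := 2 * ρ) (by positivity)
    (by linarith) fun y hy ↦ (hf y hy).1
  have hsub : ball b (2 * ρ) ⊆ ball b (3 * ρ) := ball_subset_ball (by linarith)
  have hgf' (y) (hy : y ∈ ball b (2 * ρ)) : g =ᶠ[𝓝 y] f :=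
    (hgf.mono ball_subset_closedBall).eventuallyEq_of_mem (isOpen_ball.mem_nhds hy)
  have hg_le := harnack_of_contDiff hg hρ hab
    (fun y hy ↦ (laplacian_congr_nhds (hgf' y hy)).eq_of_nhds.trans
      (hf y (hsub hy)).2.self_of_nhds)
    (fun y hy ↦ (hgf' y hy).eq_of_nhds ▸ hf0 y (hsub hy))
  rwa [hgf (mem_closedBall.mpr (by linarith)), hgf (mem_closedBall_self (by positivity))] at hg_le

end HarnackInequality

section Comparability

/-- Two real numbers agree up to the factor `H`. For `H > 1` this forces both to be nonnegative. -/
def ComparableWith (H a b : ℝ) : Prop := a ≤ H * b ∧ b ≤ H * a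

namespace ComparableWith

variable {H K a b d : ℝ}

theorem symm (h : ComparableWith H a b) : ComparableWith H b a := And.symm h

theorem trans (hH : 0 ≤ H) (hK : 0 ≤ K) (hab : ComparableWith H a b) (hbd : ComparableWith K b d) :
    ComparableWith (H * K) a d := by
  refine ⟨hab.1.trans ?_, hbd.2.trans ?_⟩
  · rw [mul_assoc]
    exact mul_le_mul_of_nonneg_left hbd.1 hH
  · rw [mul_comm H, mul_assoc]
    exact mul_le_mul_of_nonneg_left hab.2 hK

theorem nonneg_left (hH : 1 < H) (h : ComparableWith H a b) : 0 ≤ a := by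
  by_contra! ha
  have hHab : H * b ≤ H * (H * a) := mul_le_mul_of_nonneg_left h.2 (by linarith)
  nlinarith [h.1, mul_pos (sub_pos.mpr hH) (sub_pos.mpr hH)]

theorem mono (hH : 1 < H) (hHK : H ≤ K) (h : ComparableWith H a b) : ComparableWith K a b :=
  ⟨h.1.trans (mul_le_mul_of_nonneg_right hHK (h.symm.nonneg_left hH)),
    h.2.trans (mul_le_mul_of_nonneg_right hHK (h.nonneg_left hH))⟩

end ComparableWith

variable {X : Type*} [PseudoMetricSpace X] {γ : ℝ → X} {δ b : ℝ}

theorem exists_dist_eq_and_eVariationOn_le {a L : ℝ} (hab : a ≤ b)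
    (hγ : ContinuousOn γ (Icc a b)) (hδ : 0 ≤ δ) (hL : 0 ≤ L) (hδγ : δ ≤ dist (γ a) (γ b))
    (hvar : eVariationOn γ (Icc a b) ≤ ENNReal.ofReal (δ + L)) :
    ∃ s ∈ Icc a b, dist (γ a) (γ s) = δ ∧ eVariationOn γ (Icc s b) ≤ ENNReal.ofReal L := by
  have hdist : ContinuousOn (fun t ↦ dist (γ a) (γ t)) (Icc a b) := by fun_prop
  obtain ⟨s, hs, hsδ⟩ := intermediate_value_Icc hab hdist ⟨(dist_self (γ a)).trans_le hδ, hδγ⟩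
  have hfirst : ENNReal.ofReal δ ≤ eVariationOn γ (Icc a s) := by
    rw [← hsδ, ← edist_dist]
    exact eVariationOn.edist_le γ (left_mem_Icc.mpr hs.1) (right_mem_Icc.mpr hs.1)
  have hadd := eVariationOn.Icc_add_Icc γ hs.1 hs.2 (mem_univ s)
  simp only [univ_inter] at hadd
  refine ⟨s, hs, hsδ, (ENNReal.add_le_add_iff_left (ENNReal.ofReal_ne_top (r := δ))).mp ?_⟩
  calc ENNReal.ofReal δ + eVariationOn γ (Icc s b)
      ≤ eVariationOn γ (Icc a s) + eVariationOn γ (Icc s b) := by gcongr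
    _ = eVariationOn γ (Icc a b) := hadd
    _ ≤ ENNReal.ofReal δ + ENNReal.ofReal L := by rwa [← ENNReal.ofReal_add hδ hL]

theorem comparableWith_of_eVariationOn_le {f : X → ℝ} {K : ℝ} (hK : 1 < K) (hδ : 0 ≤ δ) {k : ℕ}
    {a : ℝ} (hab : a ≤ b) (hγ : ContinuousOn γ (Icc a b))
    (hstep : ∀ s ∈ Icc a b, ∀ t ∈ Icc a b, dist (γ s) (γ t) ≤ δ →
      ComparableWith K (f (γ s)) (f (γ t)))
    (hvar : eVariationOn γ (Icc a b) ≤ ENNReal.ofReal (k * δ)) :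
    ComparableWith (K ^ (k + 1)) (f (γ a)) (f (γ b)) := by
  have hb := right_mem_Icc.mpr hab
  induction k generalizing a with
  | zero =>
    have ha := left_mem_Icc.mpr hab
    have hdist : edist (γ a) (γ b) ≤ 0 := by simpa using (eVariationOn.edist_le γ ha hb).trans hvar
    rw [zero_add, pow_one]
    exact hstep a ha b hb (by
      rwa [dist_edist, nonpos_iff_eq_zero.mp hdist, ENNReal.toReal_zero])
  | succ k ih =>
    have ha := left_mem_Icc.mpr hab
    rcases le_or_gt (dist (γ a) (γ b)) δ with hclose | hfar
    · exact (hstep a ha b hb hclose).mono hK (le_self_pow₀ hK.le (by lia))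
    obtain ⟨s, hs, hsδ, hsvar⟩ := exists_dist_eq_and_eVariationOn_le hab hγ hδ
      (L := k * δ) (by positivity) hfar.le (hvar.trans_eq (by push_cast; ring_nf))
    have hsub : Icc s b ⊆ Icc a b := Icc_subset_Icc_left hs.1
    rw [pow_succ']
    exact (hstep a ha s hs hsδ.le).trans (by positivity) (by positivity)
      (ih hs.2 (hγ.mono hsub) (fun t ht r hr ↦ hstep t (hsub ht) r (hsub hr)) hsvar
        (right_mem_Icc.mpr hs.2))

end Comparability

section UniformDomain

theorem infDist_frontier_pos {X : Type*} [PseudoMetricSpace X] {U : Set X} {x : X} (hU : IsOpen U)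
    (hF : (frontier U).Nonempty) (hx : x ∈ U) : 0 < infDist x (frontier U) := by
  refine (isClosed_frontier.notMem_iff_infDist_pos hF).mp fun hxF ↦ ?_
  exact (hU.frontier_eq ▸ hxF).2 hx

theorem ball_infDist_frontier_subset {E : Type*} [SeminormedAddCommGroup E] [NormedSpace ℝ E]
    {U : Set E} {x : E} (hU : IsOpen U) (hx : x ∈ U) : ball x (infDist x (frontier U)) ⊆ U := by
  rcases infDist_nonneg.eq_or_lt' (a := infDist x (frontier U)) with h0 | hpos
  · simp [h0]
  refine (convex_ball x _).isPreconnected.subset_of_closure_inter_subset hU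
    ⟨x, mem_ball_self hpos, hx⟩ fun y ⟨hyU, hyx⟩ ↦ ?_
  by_contra hy
  have hyF : y ∈ frontier U := hU.frontier_eq ▸ ⟨hyU, hy⟩
  exact (mem_ball'.mp hyx).not_ge (infDist_le_dist_of_mem hyF)

theorem IsCurveIn.dist_le {X : Type*} [PseudoMetricSpace X] {Ω : Set X} {x y : X} {γ : ℝ → X}
    (hγ : IsCurveIn Ω x y γ) {L : ℝ} (hL : 0 ≤ L) (hlength : curveLength γ ≤ ENNReal.ofReal L)
    {t : ℝ} (ht : t ∈ Icc (0 : ℝ) 1) : dist x (γ t) ≤ L := by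
  have hdist := (eVariationOn.edist_le γ (left_mem_Icc.mpr zero_le_one) ht).trans hlength
  rwa [hγ.2.2.1, edist_dist, ENNReal.ofReal_le_ofReal_iff hL] at hdist

/-- The constant in the Harnack chain inequality for two points at distance at most `Λ * s`, both
at distance at least `s` from the boundary of a `(c, C)`-uniform domain in `ℝⁿ`: they are joined by
`24 * C * Λ / c` balls, each of which costs a factor `2 * 2 ^ n`. -/
def chainConst (n : ℕ) (c C Λ : ℝ) : ℝ := (2 * 2 ^ n) ^ (⌈24 * C * Λ / c⌉₊ + 1)

theorem one_lt_two_mul_two_pow (n : ℕ) : (1 : ℝ) < 2 * 2 ^ n := by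
  linarith [one_le_pow₀ (one_le_two (α := ℝ)) (n := n)]

theorem one_lt_chainConst (n : ℕ) (c C Λ : ℝ) : 1 < chainConst n c C Λ :=
  one_lt_pow₀ (one_lt_two_mul_two_pow n) (Nat.succ_ne_zero _)

namespace IsUniformDomain

variable {n : ℕ} {c C : ℝ} {U W : Set (En n)} {x y : En n} {s : ℝ}

theorem exists_curve (hU : IsUniformDomain c C U) (hc₀ : 0 ≤ c) (hc₁ : c ≤ 1) (hx : x ∈ U)
    (hy : y ∈ U) (hs : 0 ≤ s) (hsx : s ≤ infDist x (frontier U))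
    (hsy : s ≤ infDist y (frontier U)) :
    ∃ γ : ℝ → En n, IsCurveIn U x y γ ∧ curveLength γ ≤ ENNReal.ofReal (C * dist x y) ∧
      ∀ t ∈ Icc (0 : ℝ) 1, c * s / 2 ≤ infDist (γ t) (frontier U) := by
  obtain ⟨γ, hγ, hlength, hcigar⟩ := hU.2.2 x hx y hy
  refine ⟨γ, hγ, hlength, fun t ht ↦ ?_⟩
  have hcs : c * s ≤ s := mul_le_of_le_one_left hs hc₁
  have hxt : infDist x (frontier U) ≤ infDist (γ t) (frontier U) + dist x (γ t) :=
    infDist_le_infDist_add_dist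
  have hyt : infDist y (frontier U) ≤ infDist (γ t) (frontier U) + dist (γ t) y :=
    dist_comm (γ t) y ▸ infDist_le_infDist_add_dist
  rcases le_total (s / 2) (min (dist x (γ t)) (dist (γ t) y)) with hfar | hnear
  · linarith [hcigar t ht, mul_le_mul_of_nonneg_left hfar hc₀]
  · rcases min_le_iff.mp hnear with h | h <;> linarith

theorem comparableWith (hU : IsUniformDomain c C U) (hc₀ : 0 < c) (hc₁ : c ≤ 1) (hC : 0 ≤ C)
    {Λ : ℝ} (hΛ : 0 ≤ Λ) (hx : x ∈ U) (hy : y ∈ U) (hs : 0 < s)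
    (hsx : s ≤ infDist x (frontier U)) (hsy : s ≤ infDist y (frontier U))
    (hxy : dist x y ≤ Λ * s) (hW : ball x ((C * Λ + 1) * s) ⊆ W) {f : En n → ℝ}
    (hf : HarmonicOnNhd f (U ∩ W)) (hf0 : ∀ p ∈ U ∩ W, 0 ≤ f p) :
    ComparableWith (chainConst n c C Λ) (f x) (f y) := by
  obtain ⟨γ, hγ, hlength, hdepth⟩ := hU.exists_curve hc₀.le hc₁ hx hy hs.le hsx hsy
  have hlength' : curveLength γ ≤ ENNReal.ofReal (C * Λ * s) :=
    hlength.trans (ENNReal.ofReal_le_ofReal (by rw [mul_assoc]; gcongr))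
  set ρ : ℝ := c * s / 6 with hρ
  have hball (t) (ht : t ∈ Icc (0 : ℝ) 1) : ball (γ t) (3 * ρ) ⊆ U ∩ W := by
    refine subset_inter ((ball_subset_ball ?_).trans
      (ball_infDist_frontier_subset hU.1 (hγ.2.1 ht))) ((ball_subset_ball' ?_).trans hW)
    · linarith [hdepth t ht]
    · rw [dist_comm]
      linarith [hγ.dist_le (by positivity) hlength' ht,
        mul_le_of_le_one_left hs.le hc₁]
  have hstep (a b) (hb : b ∈ Icc (0 : ℝ) 1)
      (hab : dist (γ a) (γ b) ≤ ρ / 4) : f (γ a) ≤ 2 * 2 ^ n * f (γ b) := by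
    simpa using harnack_of_harmonicOnNhd (fun p hp ↦ hf p (hball b hb hp))
      (fun p hp ↦ hf0 p (hball b hb hp)) (by positivity) hab
  have hcover : C * Λ * s ≤ ⌈24 * C * Λ / c⌉₊ * (ρ / 4) :=
    calc C * Λ * s = 24 * C * Λ / c * (ρ / 4) := by rw [hρ]; field_simp; ring
      _ ≤ _ := by gcongr; exact Nat.le_ceil _
  have hchain := comparableWith_of_eVariationOn_le (f := f) (one_lt_two_mul_two_pow n)
    (by positivity) zero_le_one hγ.1
    (fun a ha b hb hab ↦ ⟨hstep a b hb hab, hstep b a ha (by rwa [dist_comm])⟩)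
    (hlength'.trans (ENNReal.ofReal_le_ofReal hcover))
  rwa [hγ.2.2.1, hγ.2.2.2] at hchain

theorem exists_corkscrew (hU : IsUniformDomain c C U) (hc : 0 < c) (hx : x ∈ U) (hs : 0 ≤ s)
    (hdiam : ENNReal.ofReal (4 * s / c) < Metric.ediam U) :
    ∃ z ∈ U, dist x z = s / c ∧ s ≤ infDist z (frontier U) := by
  set R : ℝ := s / c
  have hR : 0 ≤ R := by positivity
  obtain ⟨y, hy, hxy⟩ : ∃ y ∈ U, 2 * R ≤ dist x y := by
    by_contra! hnear
    refine hdiam.not_ge (Metric.ediam_le fun y hy z hz ↦ ?_)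
    rw [edist_dist]
    refine ENNReal.ofReal_le_ofReal ?_
    have hyz := dist_triangle_left y z x
    rw [mul_div_assoc]
    linarith [hnear y hy, hnear z hz]
  obtain ⟨γ, ⟨hγ, hγU, hγ0, hγ1⟩, -, hcigar⟩ := hU.2.2 x hx y hy
  have hdist : ContinuousOn (fun t ↦ dist x (γ t)) (Icc 0 1) := by fun_prop
  obtain ⟨t, ht, htR : dist x (γ t) = R⟩ := intermediate_value_Icc zero_le_one hdist
    (mem_Icc.mpr ⟨by simpa [hγ0] using hR, by simp only [hγ1]; linarith⟩)
  refine ⟨γ t, hγU ht, htR, ?_⟩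
  have hRy : R ≤ dist (γ t) y := by linarith [dist_triangle x (γ t) y]
  calc s = c * min (dist x (γ t)) (dist (γ t) y) := by
        rw [htR, min_eq_left hRy, mul_div_cancel₀ _ hc.ne']
    _ ≤ _ := hcigar t ht

end IsUniformDomain

end UniformDomain

section BoundaryDecay

/-- The comparison constant between the values of a positive harmonic function at a point at
distance at least `s` from the boundary and at a nearby point at distance at least `2 * s`. -/
def doublingConst (n : ℕ) (c C : ℝ) : ℝ := chainConst n c C (2 / c)

/-- The number of applications of the growth lemma that make up for the loss of a factor
`2 * doublingConst n c C`. -/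
def decaySteps (n : ℕ) (c C : ℝ) : ℕ :=
  ⌈Real.log (2 * doublingConst n c C) / -Real.log (growthFactor n (4 / c))⌉₊

/-- The exponent `k` for which "deep" in a ball of radius `r` means at distance at least `r / 2 ^ k`
from the boundary. It is so large that the decay estimate with `decaySteps` iterations at scale
`r / 2 ^ k`, and a doubling at that scale, take place in balls of radius `r / 4`. -/
def depthExponent (n : ℕ) (c C : ℝ) : ℕ :=
  Nat.clog 2 ⌈4 * (decaySteps n c C * (6 / c) + (C * (2 / c) + 1))⌉₊

theorem one_lt_doublingConst (n : ℕ) (c C : ℝ) : 1 < doublingConst n c C :=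
  one_lt_chainConst n c C _

theorem doublingConst_pos (n : ℕ) (c C : ℝ) : 0 < doublingConst n c C :=
  zero_lt_one.trans (one_lt_doublingConst n c C)

variable {n : ℕ} {c C : ℝ}

theorem growthFactor_pow_decaySteps_le (n : ℕ) (hc : 0 < c) (C : ℝ) :
    growthFactor n (4 / c) ^ decaySteps n c C ≤ 1 / (2 * doublingConst n c C) := by
  have hθ := growthFactor_pos n (4 / c)
  have hlog : 0 < -Real.log (growthFactor n (4 / c)) :=
    neg_pos.mpr (Real.log_neg hθ (growthFactor_lt_one n (by positivity)))
  have hH := doublingConst_pos n c C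
  have hsteps : Real.log (2 * doublingConst n c C) ≤
      decaySteps n c C * -Real.log (growthFactor n (4 / c)) :=
    (div_le_iff₀ hlog).mp (Nat.le_ceil _)
  rw [← Real.log_le_log_iff (by positivity) (by positivity), Real.log_pow, one_div, Real.log_inv]
  linarith

theorem le_two_pow_depthExponent (n : ℕ) (c C : ℝ) :
    4 * (decaySteps n c C * (6 / c) + (C * (2 / c) + 1)) ≤ 2 ^ depthExponent n c C :=
  (Nat.le_ceil _).trans (by exact_mod_cast Nat.le_pow_clog one_lt_two _)

theorem decaySteps_mul_le (hc : 0 < c) (hC : 0 ≤ C) {r : ℝ} (hr : 0 ≤ r) :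
    decaySteps n c C * (6 / c * (r / 2 ^ depthExponent n c C)) ≤ r / 4 := by
  have hk := le_two_pow_depthExponent n c C
  have hdbl : 0 ≤ C * (2 / c) + 1 := by positivity
  calc decaySteps n c C * (6 / c * (r / 2 ^ depthExponent n c C))
      = decaySteps n c C * (6 / c) * (r / 2 ^ depthExponent n c C) := by ring
    _ ≤ 2 ^ depthExponent n c C / 4 * (r / 2 ^ depthExponent n c C) := by gcongr; linarith
    _ = r / 4 := by field_simp

theorem doubling_radius_mul_le (hc : 0 < c) {r : ℝ} (hr : 0 ≤ r) :
    (C * (2 / c) + 1) * (r / 2 ^ depthExponent n c C) ≤ r / 4 := by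
  have hk := le_two_pow_depthExponent n c C
  have hdecay : 0 ≤ decaySteps n c C * (6 / c) := by positivity
  calc (C * (2 / c) + 1) * (r / 2 ^ depthExponent n c C)
      ≤ 2 ^ depthExponent n c C / 4 * (r / 2 ^ depthExponent n c C) := by gcongr; linarith
    _ = r / 4 := by field_simp

namespace IsUniformDomain

variable {U W : Set (En n)} {x : En n} {t : ℝ}

theorem exists_comparableWith_double (hU : IsUniformDomain c C U) (hc₀ : 0 < c) (hc₁ : c ≤ 1)
    (hC : 0 ≤ C) (hx : x ∈ U) {s : ℝ} (hs : 0 < s) (hsx : s ≤ infDist x (frontier U))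
    (hdiam : ENNReal.ofReal (8 * s / c) < Metric.ediam U)
    (hW : ball x ((C * (2 / c) + 1) * s) ⊆ W) {f : En n → ℝ}
    (hf : HarmonicOnNhd f (U ∩ W)) (hf0 : ∀ p ∈ U ∩ W, 0 ≤ f p) :
    ∃ z ∈ U, dist x z = 2 / c * s ∧ 2 * s ≤ infDist z (frontier U) ∧
      ComparableWith (doublingConst n c C) (f x) (f z) := by
  obtain ⟨z, hz, hxz, hsz⟩ := hU.exists_corkscrew hc₀ hx (s := 2 * s) (by positivity)
    (by convert hdiam using 3; ring)
  rw [mul_div_right_comm] at hxz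
  exact ⟨z, hz, hxz, hsz, hU.comparableWith hc₀ hc₁ hC (by positivity) hx hz hs hsx
    (by linarith) hxz.le hW hf hf0⟩

theorem le_growthFactor_mul (hU : IsUniformDomain c C U) (hc₀ : 0 < c) (hc₁ : c ≤ 1)
    (hW : IsOpen W) {w : En n → ℝ} (hw : HarmonicContOnCl w (U ∩ W))
    (hbd : ∀ y ∈ frontier U ∩ W, w y ≤ 0) (ht : 0 < t)
    (hdiam : ENNReal.ofReal (8 * t / c) < Metric.ediam U) {S : ℝ} (hS : 0 < S) (hx : x ∈ U)
    (hball : closedBall x (6 / c * t) ⊆ W) (hwS : ∀ y ∈ U ∩ closedBall x (6 / c * t), w y ≤ S)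
    (hw0 : ∀ y ∈ U ∩ closedBall x (6 / c * t), t ≤ infDist y (frontier U) → w y ≤ 0) :
    w x ≤ growthFactor n (4 / c) * S := by
  obtain ⟨z, -, hxz, htz⟩ := hU.exists_corkscrew hc₀ hx (s := 2 * t) (by positivity)
    (by convert hdiam using 3; ring)
  have hzx : closedBall z (4 / c * t) ⊆ closedBall x (6 / c * t) :=
    closedBall_subset_closedBall' (by rw [dist_comm, hxz]; apply le_of_eq; ring)
  have htc : t ≤ 4 / c * t := le_mul_of_one_le_left ht.le ((one_le_div hc₀).mpr (by linarith))
  have hgrowth := _root_.le_growthFactor_mul hU.1 hW hw hbd (κ := 4 / c) (by positivity) ht hS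
    (hzx.trans hball) (fun y hy ↦ hwS y ⟨hy.1, hzx hy.2⟩)
    (fun y hy ↦ hw0 y ⟨hy.1, hzx (closedBall_subset_closedBall htc hy.2)⟩ ?_) hx
    (by rw [hxz]; apply le_of_eq; ring)
  · rwa [finrank_euclideanSpace_fin] at hgrowth
  · have hinf : infDist z (frontier U) ≤ infDist y (frontier U) + dist z y :=
      infDist_le_infDist_add_dist
    linarith [mem_closedBall'.mp hy.2]

theorem le_growthFactor_pow_mul (hU : IsUniformDomain c C U) (hc₀ : 0 < c) (hc₁ : c ≤ 1)
    (hW : IsOpen W) {w : En n → ℝ} (hw : HarmonicContOnCl w (U ∩ W))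
    (hbd : ∀ y ∈ frontier U ∩ W, w y ≤ 0) (ht : 0 < t)
    (hdiam : ENNReal.ofReal (8 * t / c) < Metric.ediam U) {S : ℝ} (hS : 0 < S) (m : ℕ)
    (hx : x ∈ U) (hball : closedBall x (m * (6 / c * t)) ⊆ W)
    (hwS : ∀ y ∈ U ∩ closedBall x (m * (6 / c * t)), w y ≤ S)
    (hw0 : ∀ y ∈ U ∩ closedBall x (m * (6 / c * t)), t ≤ infDist y (frontier U) → w y ≤ 0) :
    w x ≤ growthFactor n (4 / c) ^ m * S := by
  induction m generalizing x with
  | zero => simpa using hwS x ⟨hx, by simp⟩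
  | succ m ih =>
    have hsplit : ((m + 1 : ℕ) : ℝ) * (6 / c * t) = m * (6 / c * t) + 6 / c * t := by
      push_cast; ring
    have hnear : closedBall x (6 / c * t) ⊆ closedBall x ((m + 1 : ℕ) * (6 / c * t)) :=
      closedBall_subset_closedBall (by
        rw [hsplit]; exact le_add_of_nonneg_left (by positivity))
    have hsub (y) (hy : y ∈ closedBall x (6 / c * t)) :
        closedBall y (m * (6 / c * t)) ⊆ closedBall x ((m + 1 : ℕ) * (6 / c * t)) :=
      closedBall_subset_closedBall' (by rw [hsplit]; linarith [mem_closedBall.mp hy])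
    have hm : 0 < growthFactor n (4 / c) ^ m * S :=
      mul_pos (pow_pos (growthFactor_pos _ _) _) hS
    rw [pow_succ', mul_assoc]
    exact hU.le_growthFactor_mul hc₀ hc₁ hW hw hbd ht hdiam hm hx (hnear.trans hball)
      (fun y ⟨hyU, hyx⟩ ↦ ih hyU ((hsub y hyx).trans hball)
        (fun p hp ↦ hwS p ⟨hp.1, hsub y hyx hp.2⟩) fun p hp ↦ hw0 p ⟨hp.1, hsub y hyx hp.2⟩)
      fun y hy ↦ hw0 y ⟨hy.1, hnear hy.2⟩

theorem le_of_le_two_mul_doublingConst_mul (hU : IsUniformDomain c C U) (hc₀ : 0 < c) (hc₁ : c ≤ 1)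
    (hC : 0 ≤ C) (hW : IsOpen W) {w : En n → ℝ} (hw : HarmonicContOnCl w (U ∩ W))
    (hbd : ∀ y ∈ frontier U ∩ W, w y ≤ 0) {r : ℝ} (hr : 0 < r)
    (hdiam : ENNReal.ofReal (8 * r / c) < Metric.ediam U) {S : ℝ} (hS : 0 < S) (hx : x ∈ U)
    (hball : closedBall x (r / 4) ⊆ W)
    (hwS : ∀ y ∈ U ∩ closedBall x (r / 4), w y ≤ 2 * doublingConst n c C * S)
    (hw0 : ∀ y ∈ U ∩ closedBall x (r / 4),
      r / 2 ^ depthExponent n c C ≤ infDist y (frontier U) → w y ≤ 0) : w x ≤ S := by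
  have hH := doublingConst_pos n c C
  have hsub := closedBall_subset_closedBall (x := x) (decaySteps_mul_le (n := n) hc₀ hC hr.le)
  have hkr : r / 2 ^ depthExponent n c C ≤ r := div_le_self hr.le (one_le_pow₀ one_le_two)
  calc w x ≤ growthFactor n (4 / c) ^ decaySteps n c C * (2 * doublingConst n c C * S) :=
        hU.le_growthFactor_pow_mul hc₀ hc₁ hW hw hbd (by positivity)
          ((ENNReal.ofReal_le_ofReal (by gcongr)).trans_lt hdiam) (by positivity) _ hx
          (hsub.trans hball) (fun y hy ↦ hwS y ⟨hy.1, hsub hy.2⟩)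
          fun y hy ↦ hw0 y ⟨hy.1, hsub hy.2⟩
    _ ≤ 1 / (2 * doublingConst n c C) * (2 * doublingConst n c C * S) := by
        gcongr; exact growthFactor_pow_decaySteps_le n hc₀ C
    _ = S := by field_simp

end IsUniformDomain

end BoundaryDecay

section PositivityPropagation

/-- The condition that is propagated to smaller and smaller balls: on the part of `U` within `ρ` of
`x`, the function `w` is at least `-b`, and it is at least `b` at distance `ρ / 2 ^ k` or more from
the boundary of `U`. -/
def IsAlmostPositive {n : ℕ} (U : Set (En n)) (k : ℕ) (w : En n → ℝ) (x : En n) (ρ b : ℝ) :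
    Prop :=
  ∀ y ∈ U ∩ closedBall x ρ, -b ≤ w y ∧ (ρ / 2 ^ k ≤ infDist y (frontier U) → b ≤ w y)

namespace IsUniformDomain

variable {n : ℕ} {c C : ℝ} {U W : Set (En n)} {x y : En n} {w : En n → ℝ} {ρ b : ℝ}

theorem neg_div_le_of_isAlmostPositive (hU : IsUniformDomain c C U) (hc₀ : 0 < c) (hc₁ : c ≤ 1)
    (hC : 0 ≤ C) (hW : IsOpen W) (hw : HarmonicContOnCl w (U ∩ W))
    (hbd : ∀ p ∈ frontier U ∩ W, 0 ≤ w p) (hρ : 0 < ρ)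
    (hdiam : ENNReal.ofReal (8 * ρ / c) < Metric.ediam U) (hball : closedBall x ρ ⊆ W) (hb : 0 < b)
    (hpos : IsAlmostPositive U (depthExponent n c C) w x ρ b)
    (hy : y ∈ U ∩ closedBall x (3 / 4 * ρ)) : -(b / (2 * doublingConst n c C)) ≤ w y := by
  have hH := doublingConst_pos n c C
  have hsub : closedBall y (ρ / 4) ⊆ closedBall x ρ :=
    closedBall_subset_closedBall' (by linarith [mem_closedBall.mp hy.2])
  rw [neg_le]
  refine hU.le_of_le_two_mul_doublingConst_mul hc₀ hc₁ hC hW hw.neg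
    (fun p hp ↦ neg_nonpos.mpr (hbd p hp)) hρ hdiam (by positivity) hy.1 (hsub.trans hball)
    (fun p hp ↦ ?_) fun p hp hdepth ↦ ?_
  · rw [mul_div_cancel₀ b (by positivity)]
    exact neg_le.mp (hpos p ⟨hp.1, hsub hp.2⟩).1
  · exact neg_nonpos.mpr (hb.le.trans ((hpos p ⟨hp.1, hsub hp.2⟩).2 hdepth))

theorem div_le_of_isAlmostPositive (hU : IsUniformDomain c C U) (hc₀ : 0 < c) (hc₁ : c ≤ 1)
    (hC : 1 ≤ C) (hW : IsOpen W) (hw : HarmonicContOnCl w (U ∩ W))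
    (hbd : ∀ p ∈ frontier U ∩ W, 0 ≤ w p) (hρ : 0 < ρ)
    (hdiam : ENNReal.ofReal (8 * ρ / c) < Metric.ediam U) (hball : closedBall x ρ ⊆ W) (hb : 0 < b)
    (hpos : IsAlmostPositive U (depthExponent n c C) w x ρ b)
    (hy : y ∈ U ∩ closedBall x (ρ / 2))
    (hdepth : ρ / 2 / 2 ^ depthExponent n c C ≤ infDist y (frontier U)) :
    b / (2 * doublingConst n c C) ≤ w y := by
  have hC₀ : 0 ≤ C := zero_le_one.trans hC
  set H : ℝ := doublingConst n c C
  have hH : 0 < H := doublingConst_pos n c C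
  have hlower {p} (hp : p ∈ U ∩ closedBall x (3 / 4 * ρ)) : -(b / (2 * H)) ≤ w p :=
    hU.neg_div_le_of_isAlmostPositive hc₀ hc₁ hC₀ hW hw hbd hρ hdiam hball hb hpos hp
  obtain ⟨hyU, hyx⟩ := hy
  set s : ℝ := ρ / 2 / 2 ^ depthExponent n c C with hs
  have hs₀ : 0 < s := by positivity
  have hsρ : s ≤ ρ := (div_le_self (by positivity) (one_le_pow₀ one_le_two)).trans (by linarith)
  have hradius : (C * (2 / c) + 1) * s ≤ ρ / 2 / 4 := doubling_radius_mul_le hc₀ (by positivity)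
  have hnear : ball y ((C * (2 / c) + 1) * s) ⊆ closedBall x (3 / 4 * ρ) :=
    ball_subset_closedBall.trans
      (closedBall_subset_closedBall' (by linarith [mem_closedBall.mp hyx]))
  have hnearW := (hnear.trans (closedBall_subset_closedBall (by linarith))).trans hball
  obtain ⟨z, hz, hyz, hsz, hcomp⟩ := hU.exists_comparableWith_double hc₀ hc₁ hC₀ hyU hs₀ hdepth
    ((ENNReal.ofReal_le_ofReal (by gcongr)).trans_lt hdiam) subset_rfl
    ((hw.fun_add_const (b / (2 * H))).harmonicOnNhd.mono (inter_subset_inter_right U hnearW))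
    (fun p hp ↦ by linarith [hlower ⟨hp.1, hnear hp.2⟩])
  have hyz' : dist y z ≤ (C * (2 / c) + 1) * s := by
    rw [hyz]
    gcongr
    linarith [le_mul_of_one_le_left (show 0 ≤ 2 / c by positivity) hC]
  have hzx : z ∈ closedBall x ρ := by
    rw [mem_closedBall]
    linarith [dist_triangle_left z x y, mem_closedBall.mp hyx]
  have hbz : b ≤ w z := (hpos z ⟨hz, hzx⟩).2 (hsz.trans_eq' (by rw [hs]; ring))
  have hHb : H * (b / (2 * H)) = b / 2 := by field_simp
  refine le_of_mul_le_mul_left ?_ hH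
  have hhb : 0 < b / (2 * H) := by positivity
  linarith [hcomp.2, mul_add H (w y) (b / (2 * H))]

theorem isAlmostPositive_half (hU : IsUniformDomain c C U) (hc₀ : 0 < c) (hc₁ : c ≤ 1)
    (hC : 1 ≤ C) (hW : IsOpen W) (hw : HarmonicContOnCl w (U ∩ W))
    (hbd : ∀ p ∈ frontier U ∩ W, 0 ≤ w p) (hρ : 0 < ρ)
    (hdiam : ENNReal.ofReal (8 * ρ / c) < Metric.ediam U) (hball : closedBall x ρ ⊆ W) (hb : 0 < b)
    (hpos : IsAlmostPositive U (depthExponent n c C) w x ρ b) :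
    IsAlmostPositive U (depthExponent n c C) w x (ρ / 2) (b / (2 * doublingConst n c C)) := by
  have hsub : closedBall x (ρ / 2) ⊆ closedBall x (3 / 4 * ρ) :=
    closedBall_subset_closedBall (by linarith)
  exact fun y hy ↦ ⟨hU.neg_div_le_of_isAlmostPositive hc₀ hc₁ (zero_le_one.trans hC) hW hw hbd hρ
    hdiam hball hb hpos ⟨hy.1, hsub hy.2⟩,
    hU.div_le_of_isAlmostPositive hc₀ hc₁ hC hW hw hbd hρ hdiam hball hb hpos hy⟩

theorem isAlmostPositive_half_pow (hU : IsUniformDomain c C U) (hc₀ : 0 < c) (hc₁ : c ≤ 1)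
    (hC : 1 ≤ C) (hW : IsOpen W) (hw : HarmonicContOnCl w (U ∩ W))
    (hbd : ∀ p ∈ frontier U ∩ W, 0 ≤ w p) (hρ : 0 < ρ)
    (hdiam : ENNReal.ofReal (8 * ρ / c) < Metric.ediam U) (hball : closedBall x ρ ⊆ W) (hb : 0 < b)
    (hpos : IsAlmostPositive U (depthExponent n c C) w x ρ b) (j : ℕ) :
    IsAlmostPositive U (depthExponent n c C) w x (ρ / 2 ^ j)
      (b / (2 * doublingConst n c C) ^ j) := by
  have hH := doublingConst_pos n c C
  induction j with
  | zero => simpa using hpos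
  | succ j ih =>
    have hρj : ρ / 2 ^ j ≤ ρ := div_le_self hρ.le (one_le_pow₀ one_le_two)
    rw [pow_succ, pow_succ, ← div_div, ← div_div]
    exact hU.isAlmostPositive_half hc₀ hc₁ hC hW hw hbd (by positivity)
      ((ENNReal.ofReal_le_ofReal (by gcongr)).trans_lt hdiam)
      ((closedBall_subset_closedBall hρj).trans hball) (by positivity) ih

theorem pos_of_isAlmostPositive (hU : IsUniformDomain c C U) (hF : (frontier U).Nonempty)
    (hc₀ : 0 < c) (hc₁ : c ≤ 1) (hC : 1 ≤ C) (hW : IsOpen W) (hw : HarmonicContOnCl w (U ∩ W))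
    (hbd : ∀ p ∈ frontier U ∩ W, 0 ≤ w p) (hρ : 0 < ρ)
    (hdiam : ENNReal.ofReal (8 * ρ / c) < Metric.ediam U) (hball : closedBall x ρ ⊆ W) (hb : 0 < b)
    (hpos : IsAlmostPositive U (depthExponent n c C) w x ρ b) (hx : x ∈ U) : 0 < w x := by
  have hH := doublingConst_pos n c C
  have hdx := infDist_frontier_pos hU.1 hF hx
  obtain ⟨j, hj⟩ := pow_unbounded_of_one_lt (ρ / infDist x (frontier U)) (one_lt_two (α := ℝ))
  have hdepth : ρ / 2 ^ j / 2 ^ depthExponent n c C ≤ infDist x (frontier U) :=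
    (div_le_self (by positivity) (one_le_pow₀ one_le_two)).trans
      ((div_lt_comm₀ (by positivity) hdx).mpr hj).le
  have hbx := (hU.isAlmostPositive_half_pow hc₀ hc₁ hC hW hw hbd hρ hdiam hball hb hpos j x
    ⟨hx, mem_closedBall_self (by positivity)⟩).2 hdepth
  exact hbx.trans_lt' (by positivity)

end IsUniformDomain

end PositivityPropagation

section CentralPoint

namespace IsUniformDomain

variable {n : ℕ} {c C : ℝ} {U W : Set (En n)} {ξ y : En n} {f : En n → ℝ}

theorem exists_comparableWith_two_pow (hU : IsUniformDomain c C U) (hc₀ : 0 < c) (hc₁ : c ≤ 1)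
    (hC : 0 ≤ C) (k : ℕ) (hy : y ∈ U) {s : ℝ} (hs : 0 < s) (hsy : s ≤ infDist y (frontier U))
    (hdiam : ENNReal.ofReal (8 * (2 ^ k * s) / c) < Metric.ediam U)
    (hW : ball y (2 / c * ((2 ^ k - 1) * s) + (C * (2 / c) + 1) * (2 ^ k * s)) ⊆ W)
    (hf : HarmonicOnNhd f (U ∩ W)) (hf0 : ∀ p ∈ U ∩ W, 0 ≤ f p) :
    ∃ z ∈ U, dist y z ≤ 2 / c * ((2 ^ k - 1) * s) ∧ 2 ^ k * s ≤ infDist z (frontier U) ∧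
      ComparableWith (doublingConst n c C ^ k) (f y) (f z) := by
  induction k generalizing y s with
  | zero => exact ⟨y, hy, by simp, by simpa using hsy, by simp [ComparableWith]⟩
  | succ k ih =>
    have htwo : (1 : ℝ) ≤ 2 ^ (k + 1) := one_le_pow₀ one_le_two
    have hsk : s ≤ 2 ^ (k + 1) * s := le_mul_of_one_le_left hs.le htwo
    have hclimb : 0 ≤ 2 / c * ((2 ^ (k + 1) - 1) * s) :=
      mul_nonneg (by positivity) (mul_nonneg (by linarith) hs.le)
    have hdbl : (C * (2 / c) + 1) * s ≤ (C * (2 / c) + 1) * (2 ^ (k + 1) * s) := by gcongr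
    obtain ⟨p, hp, hyp, hsp, hfyp⟩ := hU.exists_comparableWith_double hc₀ hc₁ hC hy hs hsy
      ((ENNReal.ofReal_le_ofReal (by gcongr)).trans_lt hdiam)
      ((ball_subset_ball (by linarith)).trans hW) hf hf0
    have hscale : (2 : ℝ) ^ k * (2 * s) = 2 ^ (k + 1) * s := by ring
    have hdist : 2 / c * s + 2 / c * ((2 ^ k - 1) * (2 * s)) = 2 / c * ((2 ^ (k + 1) - 1) * s) := by
      ring
    obtain ⟨z, hz, hpz, hsz, hfpz⟩ := ih hp (s := 2 * s) (by positivity) hsp (by rwa [hscale])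
      ((ball_subset_ball' (by rw [hscale, dist_comm]; linarith)).trans hW)
    have hH := doublingConst_pos n c C
    refine ⟨z, hz, by linarith [dist_triangle y p z], by rwa [hscale] at hsz, ?_⟩
    rw [pow_succ']
    exact hfyp.trans hH.le (by positivity) hfpz

end IsUniformDomain

/-- The radius, in units of `r`, of the ball about a boundary point in which functions have to be
harmonic for their values within `3 * r` of that point to be compared with the value at a central
point: it contains the balls in which the doublings and the final Harnack chain take place. -/
def outerRadius (c C : ℝ) : ℝ := 4 + 2 / c + (C * (4 + 3 / c) + 1) + (C * (2 / c) + 1)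

theorem three_lt_outerRadius {c C : ℝ} (hc : 0 < c) (hC : 0 ≤ C) : 3 < outerRadius c C := by
  rw [outerRadius, ← sub_pos]
  ring_nf
  positivity

theorem add_div_lt_outerRadius_mul {c C r : ℝ} (hc : 0 < c) (hC : 0 ≤ C) (hr : 0 < r) :
    r + r / c < outerRadius c C * r := by
  rw [outerRadius, ← sub_pos]
  ring_nf
  positivity

/-- The comparison constant between the value at a central point of scale `r` and a value at
distance at least `r / 2 ^ k` from the boundary. -/
def centralConst (n : ℕ) (c C : ℝ) (k : ℕ) : ℝ :=
  doublingConst n c C ^ k * chainConst n c C (4 + 3 / c)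

/-- A point of `U` of size `r` both in its distance to the boundary point `ξ` and in its depth. -/
structure IsCentralPoint {n : ℕ} (c : ℝ) (U : Set (En n)) (ξ : En n) (r : ℝ) (x₀ : En n) :
    Prop where
  mem : x₀ ∈ U
  dist_le : dist x₀ ξ ≤ r + r / c
  le_infDist : r ≤ infDist x₀ (frontier U)

namespace IsUniformDomain

variable {n : ℕ} {c C : ℝ} {U W : Set (En n)} {ξ x₀ y : En n} {f : En n → ℝ} {r : ℝ}

theorem exists_isCentralPoint (hU : IsUniformDomain c C U) (hc : 0 < c) (hξ : ξ ∈ frontier U)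
    (hr : 0 < r) (hdiam : ENNReal.ofReal (8 * r / c) < Metric.ediam U) :
    ∃ x₀, IsCentralPoint c U ξ r x₀ := by
  obtain ⟨p, hp, hξp⟩ := Metric.mem_closure_iff.mp (frontier_subset_closure hξ) r hr
  obtain ⟨x₀, hx₀, hpx₀, hdepth⟩ := hU.exists_corkscrew hc hp hr.le
    ((ENNReal.ofReal_le_ofReal (by gcongr; norm_num)).trans_lt hdiam)
  exact ⟨x₀, hx₀, by linarith [dist_triangle ξ p x₀, dist_comm x₀ ξ], hdepth⟩

theorem comparableWith_of_isCentralPoint (hU : IsUniformDomain c C U) (hc₀ : 0 < c) (hc₁ : c ≤ 1)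
    (hC : 0 ≤ C) (hr : 0 < r) (hdiam : ENNReal.ofReal (8 * r / c) < Metric.ediam U)
    (hx₀ : IsCentralPoint c U ξ r x₀) (hW : ball ξ (outerRadius c C * r) ⊆ W)
    (hf : HarmonicOnNhd f (U ∩ W)) (hf0 : ∀ p ∈ U ∩ W, 0 ≤ f p) (k : ℕ)
    (hy : y ∈ U ∩ ball ξ (3 * r)) (hdepth : r / 2 ^ k ≤ infDist y (frontier U)) :
    ComparableWith (centralConst n c C k) (f y) (f x₀) := by
  have hk : (2 : ℝ) ^ k * (r / 2 ^ k) = r := by field_simp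
  have hclimb : 2 / c * ((2 ^ k - 1) * (r / 2 ^ k)) ≤ 2 / c * r := by
    rw [sub_one_mul, hk]
    gcongr
    exact sub_le_self r (by positivity)
  have houter : outerRadius c C * r =
      4 * r + 2 / c * r + (C * (4 + 3 / c) + 1) * r + (C * (2 / c) + 1) * r := by
    rw [outerRadius]; ring
  have hdbl : 0 ≤ (C * (2 / c) + 1) * r := by positivity
  have hchain : 0 ≤ (C * (4 + 3 / c) + 1) * r := by positivity
  have hyξ := mem_ball.mp hy.2
  obtain ⟨z, hz, hyz, hsz, hfyz⟩ := hU.exists_comparableWith_two_pow hc₀ hc₁ hC k hy.1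
    (by positivity) hdepth (by rwa [hk])
    ((ball_subset_ball' (by rw [hk, houter]; linarith)).trans hW) hf hf0
  rw [hk] at hsz
  have hzξ : dist z ξ ≤ 3 * r + 2 / c * r := by linarith [dist_triangle_left z ξ y]
  have hzx₀ : dist z x₀ ≤ (4 + 3 / c) * r :=
    calc dist z x₀ ≤ dist z ξ + dist x₀ ξ := dist_triangle_right z x₀ ξ
      _ ≤ (3 * r + 2 / c * r) + (r + r / c) := add_le_add hzξ hx₀.dist_le
      _ = (4 + 3 / c) * r := by ring
  exact hfyz.trans (pow_nonneg (doublingConst_pos n c C).le k)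
    (zero_le_one.trans (one_lt_chainConst n c C _).le)
    (hU.comparableWith hc₀ hc₁ hC (by positivity) hz hx₀.mem hr hsz hx₀.le_infDist hzx₀
      ((ball_subset_ball' (by rw [houter]; linarith)).trans hW) hf hf0)

end IsUniformDomain

end CentralPoint

section CarlesonEstimate

namespace IsUniformDomain

variable {n : ℕ} {c C : ℝ} {U W : Set (En n)} {ξ : En n} {u : En n → ℝ} {r M : ℝ}

theorem exists_pow_succ_lt_of_pow_lt (hU : IsUniformDomain c C U) (hc₀ : 0 < c) (hc₁ : c ≤ 1)
    (hC : 0 ≤ C) (hr : 0 < r) (hdiam : ENNReal.ofReal (8 * r / c) < Metric.ediam U) (hW : IsOpen W)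
    (hball : ball ξ (3 * r) ⊆ W) (hu : HarmonicContOnCl u (U ∩ W))
    (hbd : ∀ p ∈ frontier U ∩ W, u p ≤ 0) (hM : 0 < M)
    (hgrowth : ∀ k : ℕ, ∀ p ∈ U ∩ ball ξ (3 * r), r / 2 ^ k ≤ infDist p (frontier U) →
      u p ≤ M * doublingConst n c C ^ k) {j : ℕ} {y : En n} (hyU : y ∈ U)
    (hyξ : dist y ξ < 3 * r - r / 2 ^ j)
    (huy : 2 * (M * doublingConst n c C ^ (depthExponent n c C + j)) < u y) :
    ∃ z ∈ U, dist z ξ < 3 * r - r / 2 ^ (j + 1) ∧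
      2 * (M * doublingConst n c C ^ (depthExponent n c C + (j + 1))) < u z := by
  by_contra! hle
  set S : ℝ := M * doublingConst n c C ^ (depthExponent n c C + j) with hS
  have hH := doublingConst_pos n c C
  have hrj : 0 < r / 2 ^ j := by positivity
  have hrj' : r / 2 ^ j ≤ r := div_le_self hr.le (one_le_pow₀ one_le_two)
  have hhalf : r / 2 ^ (j + 1) = r / 2 ^ j / 2 := by rw [pow_succ, div_div]
  have hnear {p} (hp : p ∈ closedBall y (r / 2 ^ j / 4)) : dist p ξ < 3 * r - r / 2 ^ (j + 1) := by
    linarith [dist_triangle p y ξ, mem_closedBall.mp hp]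
  have hnear' : closedBall y (r / 2 ^ j / 4) ⊆ ball ξ (3 * r) := fun p hp ↦
    (hnear hp).trans_le (sub_le_self _ (by positivity))
  have hSpos : 0 < S := by positivity
  have hdecay := hU.le_of_le_two_mul_doublingConst_mul hc₀ hc₁ hC hW (hu.fun_sub_const S)
    (fun p hp ↦ by linarith [hbd p hp]) hrj
    ((ENNReal.ofReal_le_ofReal (by gcongr)).trans_lt hdiam) hSpos hyU (hnear'.trans hball)
    (fun p hp ↦ ?_) fun p hp hdepth ↦ sub_nonpos.mpr ?_
  · linarith
  · have hup := hle p hp.1 (hnear hp.2)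
    rw [← add_assoc, pow_succ, ← mul_assoc M, ← hS] at hup
    linarith
  · exact hgrowth _ p ⟨hp.1, hnear' hp.2⟩ (by rwa [add_comm, pow_add, ← div_div])

/-- If this failed, the points produced by `exists_pow_succ_lt_of_pow_lt` would stay in a bounded
set while the values there tend to infinity. -/
theorem carleson_estimate (hU : IsUniformDomain c C U) (hc₀ : 0 < c) (hc₁ : c ≤ 1) (hC : 0 ≤ C)
    (hr : 0 < r) (hdiam : ENNReal.ofReal (8 * r / c) < Metric.ediam U) (hW : IsOpen W)
    (hball : ball ξ (3 * r) ⊆ W) (hu : HarmonicContOnCl u (U ∩ W))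
    (hbd : ∀ p ∈ frontier U ∩ W, u p ≤ 0) (hM : 0 < M)
    (hgrowth : ∀ k : ℕ, ∀ p ∈ U ∩ ball ξ (3 * r), r / 2 ^ k ≤ infDist p (frontier U) →
      u p ≤ M * doublingConst n c C ^ k) {y : En n} (hy : y ∈ U ∩ ball ξ (2 * r)) :
    u y ≤ 2 * (M * doublingConst n c C ^ depthExponent n c C) := by
  by_contra! huy
  have hH := one_lt_doublingConst n c C
  have hseq (j : ℕ) : ∃ z ∈ U, dist z ξ < 3 * r - r / 2 ^ j ∧
      2 * (M * doublingConst n c C ^ (depthExponent n c C + j)) < u z := by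
    induction j with
    | zero => exact ⟨y, hy.1, by linarith [mem_ball.mp hy.2], huy⟩
    | succ j ih =>
      obtain ⟨z, hz, hzξ, huz⟩ := ih
      exact hU.exists_pow_succ_lt_of_pow_lt hc₀ hc₁ hC hr hdiam hW hball hu hbd hM hgrowth hz hzξ
        huz
  have hcompact : IsCompact (closure (U ∩ ball ξ (3 * r))) :=
    (Metric.isBounded_ball.subset inter_subset_right).isCompact_closure
  obtain ⟨B, hB⟩ := hcompact.bddAbove_image
    (hu.continuousOn.mono (closure_mono (inter_subset_inter_right U hball)))
  obtain ⟨j, hj⟩ := pow_unbounded_of_one_lt (B / (2 * M)) hH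
  obtain ⟨z, hz, hzξ, huz⟩ := hseq j
  have hzB : u z ≤ B := hB (mem_image_of_mem u
    (subset_closure ⟨hz, hzξ.trans_le (sub_le_self _ (by positivity))⟩))
  rw [div_lt_iff₀' (by positivity)] at hj
  have hpow : doublingConst n c C ^ j ≤ doublingConst n c C ^ (depthExponent n c C + j) :=
    pow_le_pow_right₀ hH.le (by lia)
  linarith [mul_le_mul_of_nonneg_left hpow (by positivity : 0 ≤ 2 * M)]

end IsUniformDomain

end CarlesonEstimate

section BoundaryHarnack

/-- The class of functions of the boundary Harnack principle: positive and harmonic on `U ∩ W`,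
continuous up to the boundary, with zero boundary values on the part of the boundary of `U` in
`W`. -/
structure IsPositiveVanishing {n : ℕ} (U W : Set (En n)) (u : En n → ℝ) : Prop where
  harmonicContOnCl : HarmonicContOnCl u (U ∩ W)
  pos : ∀ z ∈ U ∩ W, 0 < u z
  eq_zero : ∀ z ∈ frontier U ∩ W, u z = 0

/-- Twice the comparison constant between a central point of scale `r` and the points at distance
at least `r / 2 ^ depthExponent n c C` from the boundary; the factor two is the loss in the Carleson
estimate. -/
def carlesonConst (n : ℕ) (c C : ℝ) : ℝ := 2 * centralConst n c C (depthExponent n c C)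

theorem one_lt_carlesonConst (n : ℕ) (c C : ℝ) : 1 < carlesonConst n c C := by
  have hcentral : 1 ≤ centralConst n c C (depthExponent n c C) :=
    one_le_mul_of_one_le_of_one_le (one_le_pow₀ (one_lt_doublingConst n c C).le)
      (one_lt_chainConst n c C _).le
  rw [carlesonConst]
  linarith

namespace IsUniformDomain

variable {n : ℕ} {c C : ℝ} {U : Set (En n)} {ξ x₀ x : En n} {u v : En n → ℝ} {r : ℝ}

theorem le_carlesonConst_mul (hU : IsUniformDomain c C U) (hc₀ : 0 < c) (hc₁ : c ≤ 1)
    (hC : 0 ≤ C) (hr : 0 < r) (hdiam : ENNReal.ofReal (8 * r / c) < Metric.ediam U)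
    (hx₀ : IsCentralPoint c U ξ r x₀)
    (hu : IsPositiveVanishing U (ball ξ (outerRadius c C * r)) u) (hux₀ : 0 < u x₀)
    (hx : x ∈ U ∩ ball ξ (2 * r)) : u x ≤ carlesonConst n c C * u x₀ := by
  have hL : 0 < chainConst n c C (4 + 3 / c) := zero_lt_one.trans (one_lt_chainConst n c C _)
  have hsub : ball ξ (3 * r) ⊆ ball ξ (outerRadius c C * r) :=
    ball_subset_ball (mul_le_mul_of_nonneg_right (three_lt_outerRadius hc₀ hC).le hr.le)
  refine (hU.carleson_estimate hc₀ hc₁ hC hr hdiam isOpen_ball hsub hu.harmonicContOnCl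
    (fun p hp ↦ (hu.eq_zero p hp).le) (mul_pos hL hux₀) (fun k p hp hdepth ↦ ?_) hx).trans_eq ?_
  · refine (hU.comparableWith_of_isCentralPoint hc₀ hc₁ hC hr hdiam hx₀ subset_rfl
      hu.harmonicContOnCl.harmonicOnNhd (fun q hq ↦ (hu.pos q hq).le) k hp hdepth).1.trans_eq ?_
    rw [centralConst]
    ring
  · rw [carlesonConst, centralConst]
    ring

theorem isAlmostPositive_sub (hU : IsUniformDomain c C U) (hc₀ : 0 < c) (hc₁ : c ≤ 1)
    (hC : 0 ≤ C) (hr : 0 < r) (hdiam : ENNReal.ofReal (8 * r / c) < Metric.ediam U)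
    (hx₀ : IsCentralPoint c U ξ r x₀)
    (hu : IsPositiveVanishing U (ball ξ (outerRadius c C * r)) u) (hux₀ : 0 < u x₀)
    (hv : IsPositiveVanishing U (ball ξ (outerRadius c C * r)) v) (hvx₀ : 0 < v x₀)
    (hx : dist x ξ < r) :
    IsAlmostPositive U (depthExponent n c C)
      (fun y ↦ carlesonConst n c C ^ 2 * u x₀ * v y - v x₀ * u y) x r
      (carlesonConst n c C * (u x₀ * v x₀)) := by
  set K : ℝ := carlesonConst n c C with hK
  have hK₀ : 0 < K := zero_lt_one.trans (one_lt_carlesonConst n c C)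
  have hsub : closedBall x r ⊆ ball ξ (2 * r) := closedBall_subset_ball' (by linarith)
  intro y hy
  have hyW : y ∈ U ∩ ball ξ (2 * r) := ⟨hy.1, hsub hy.2⟩
  have hyA : y ∈ U ∩ ball ξ (outerRadius c C * r) := ⟨hy.1, ball_subset_ball
    (mul_le_mul_of_nonneg_right (by linarith [three_lt_outerRadius hc₀ hC]) hr.le) hyW.2⟩
  have huy : v x₀ * u y ≤ K * (u x₀ * v x₀) :=
    (mul_le_mul_of_nonneg_left (hU.le_carlesonConst_mul hc₀ hc₁ hC hr hdiam hx₀ hu hux₀ hyW)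
      hvx₀.le).trans_eq (by ring)
  refine ⟨?_, fun hdepth ↦ ?_⟩
  · linarith [mul_pos (by positivity : 0 < K ^ 2 * u x₀) (hv.pos y hyA)]
  · have hvy : 2 * v x₀ ≤ K * v y := by
      rw [hK, carlesonConst, mul_assoc]
      gcongr
      exact (hU.comparableWith_of_isCentralPoint hc₀ hc₁ hC hr hdiam hx₀ subset_rfl
        hv.harmonicContOnCl.harmonicOnNhd (fun q hq ↦ (hv.pos q hq).le) _
        ⟨hy.1, ball_subset_ball (by linarith) hyW.2⟩ hdepth).2
    have hvy' := mul_le_mul_of_nonneg_left hvy (by positivity : 0 ≤ K * u x₀)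
    linarith

theorem mul_central_lt (hU : IsUniformDomain c C U) (hF : (frontier U).Nonempty) (hc₀ : 0 < c)
    (hc₁ : c ≤ 1) (hC : 1 ≤ C) (hr : 0 < r)
    (hdiam : ENNReal.ofReal (8 * r / c) < Metric.ediam U) (hx₀ : IsCentralPoint c U ξ r x₀)
    (hu : IsPositiveVanishing U (ball ξ (outerRadius c C * r)) u) (hux₀ : 0 < u x₀)
    (hv : IsPositiveVanishing U (ball ξ (outerRadius c C * r)) v) (hvx₀ : 0 < v x₀)
    (hx : x ∈ U ∩ ball ξ r) : v x₀ * u x < carlesonConst n c C ^ 2 * u x₀ * v x := by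
  have hC₀ : 0 ≤ C := zero_le_one.trans hC
  have hK : 0 < carlesonConst n c C := zero_lt_one.trans (one_lt_carlesonConst n c C)
  have hsub : closedBall x r ⊆ ball ξ (outerRadius c C * r) := closedBall_subset_ball' (by
    nlinarith [mem_ball.mp hx.2, three_lt_outerRadius hc₀ hC₀])
  exact sub_pos.mp (hU.pos_of_isAlmostPositive hF hc₀ hc₁ hC isOpen_ball
    ((hv.harmonicContOnCl.fun_const_smul (c := carlesonConst n c C ^ 2 * u x₀)).fun_sub
      (hu.harmonicContOnCl.fun_const_smul (c := v x₀)))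
    (fun p hp ↦ by simp [hu.eq_zero p hp, hv.eq_zero p hp]) hr hdiam hsub (by positivity)
    (hU.isAlmostPositive_sub hc₀ hc₁ hC₀ hr hdiam hx₀ hu hux₀ hv hvx₀ hx.2) hx.1)

theorem boundary_harnack (hU : IsUniformDomain c C U) (hξ : ξ ∈ frontier U) (hc₀ : 0 < c)
    (hc₁ : c ≤ 1) (hC : 1 ≤ C) (hr : 0 < r)
    (hdiam : ENNReal.ofReal (8 * r / c) < Metric.ediam U)
    (hu : IsPositiveVanishing U (ball ξ (outerRadius c C * r)) u)
    (hv : IsPositiveVanishing U (ball ξ (outerRadius c C * r)) v)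
    (hx : x ∈ U ∩ ball ξ r) {x' : En n} (hx' : x' ∈ U ∩ ball ξ r) :
    u x * v x' ≤ carlesonConst n c C ^ 4 * (u x' * v x) := by
  have hF : (frontier U).Nonempty := ⟨ξ, hξ⟩
  obtain ⟨x₀, hx₀⟩ := hU.exists_isCentralPoint hc₀ hξ hr hdiam
  have hx₀A : x₀ ∈ U ∩ ball ξ (outerRadius c C * r) :=
    ⟨hx₀.mem, hx₀.dist_le.trans_lt (add_div_lt_outerRadius_mul hc₀ (zero_le_one.trans hC) hr)⟩
  have hux₀ := hu.pos x₀ hx₀A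
  have hvx₀ := hv.pos x₀ hx₀A
  have huv := hU.mul_central_lt hF hc₀ hc₁ hC hr hdiam hx₀ hu hux₀ hv hvx₀ hx
  have hvu := hU.mul_central_lt hF hc₀ hc₁ hC hr hdiam hx₀ hv hvx₀ hu hux₀ hx'
  have hsub : ball ξ r ⊆ ball ξ (outerRadius c C * r) := ball_subset_ball
    (le_mul_of_one_le_left hr.le (by linarith [three_lt_outerRadius hc₀ (zero_le_one.trans hC)]))
  have hvx := hv.pos x ⟨hx.1, hsub hx.2⟩
  have hvx' := hv.pos x' ⟨hx'.1, hsub hx'.2⟩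
  refine le_of_mul_le_mul_left ?_ (mul_pos hux₀ hvx₀)
  calc u x₀ * v x₀ * (u x * v x') = (v x₀ * u x) * (u x₀ * v x') := by ring
    _ ≤ (carlesonConst n c C ^ 2 * u x₀ * v x) * (carlesonConst n c C ^ 2 * v x₀ * u x') := by
        gcongr
    _ = u x₀ * v x₀ * (carlesonConst n c C ^ 4 * (u x' * v x)) := by ring

end IsUniformDomain

end BoundaryHarnack

/-- Boundary Harnack principle for harmonic functions vanishing on the boundary
of a `(c_u,C_u)`-uniform domain in `ℝⁿ`. -/
theorem statement0 (n : ℕ) (hn : 1 ≤ n) (cu Cu : ℝ)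
    (hcu : cu ∈ Set.Ioo (0:ℝ) 1) (hCu : 1 < Cu) :
    ∃ a₀ ∈ Set.Ioo (0:ℝ) 1, ∃ A₀ : ℝ, 1 < A₀ ∧ ∃ A₁ : ℝ, 1 < A₁ ∧
      ∀ U : Set (En n), U ≠ Set.univ → IsUniformDomain cu Cu U →
      ∀ ξ ∈ frontier U, ∀ r : ℝ, 0 < r →
        ENNReal.ofReal r < ENNReal.ofReal a₀ * EMetric.diam U →
        ∀ u v : En n → ℝ,
          (∀ z ∈ U ∩ Metric.ball ξ (A₀ * r), 0 < u z) →
          IsHarmonicOn u (U ∩ Metric.ball ξ (A₀ * r)) →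
          ContinuousOn u (closure (U ∩ Metric.ball ξ (A₀ * r))) →
          (∀ z ∈ frontier U ∩ Metric.ball ξ (A₀ * r), u z = 0) →
          (∀ z ∈ U ∩ Metric.ball ξ (A₀ * r), 0 < v z) →
          IsHarmonicOn v (U ∩ Metric.ball ξ (A₀ * r)) →
          ContinuousOn v (closure (U ∩ Metric.ball ξ (A₀ * r))) →
          (∀ z ∈ frontier U ∩ Metric.ball ξ (A₀ * r), v z = 0) →
          ∀ x ∈ U ∩ Metric.ball ξ r, ∀ x' ∈ U ∩ Metric.ball ξ r,
            u x * v x' ≤ A₁ * (u x' * v x) := by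
  obtain ⟨hc₀, hc₁⟩ := hcu
  have hA := three_lt_outerRadius hc₀ (zero_le_one.trans hCu.le)
  refine ⟨cu / 8, ⟨by linarith, by linarith⟩, outerRadius cu Cu, by linarith,
    carlesonConst n cu Cu ^ 4, one_lt_pow₀ (one_lt_carlesonConst n cu Cu) four_ne_zero, ?_⟩
  intro U _ hU ξ hξ r hr hdiam u v hupos hu hucont hu0 hvpos hv hvcont hv0 x hx x' hx'
  have hdiam' : ENNReal.ofReal (8 * r / cu) < Metric.ediam U := by
    rw [show 8 * r / cu = r / (cu / 8) by field_simp, ENNReal.ofReal_div_of_pos (by positivity)]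
    exact ENNReal.div_lt_of_lt_mul' hdiam
  have hopen : IsOpen (U ∩ ball ξ (outerRadius cu Cu * r)) := hU.1.inter isOpen_ball
  exact hU.boundary_harnack hξ hc₀ hc₁.le hCu.le hr hdiam'
    ⟨⟨hu.harmonicOnNhd hopen, hucont⟩, hupos, hu0⟩
    ⟨⟨hv.harmonicOnNhd hopen, hvcont⟩, hvpos, hv0⟩ hx hx'
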